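/- I.i.d. form of the fully quantum Slepian–Wolf bound: let ψ be a pure state on (A₁⊗A₂)⊗B⊗R, let n ≥ 1 be an integer, δ > 0, and let H_A, H_R, H_{AR} be real numbers with I := H_A + H_R − H_{AR}. Suppose d_{A₁}d_{A₂} ≤ 2^{n(H_A+δ)}, d_R ≤ 2^{n(H_R+δ)}, Tr[(ψ^{AR})²] ≤ 2^{−n(H_{AR}−δ)}, Tr[(ψ^A)²]·Tr[(ψ^R)²] ≤ 2^{−n(H_A+H_R−2δ)}, log₂ d_{A₁} ≥ n(I/2 + 2δ), and n·I ≥ n·δ + 1. Then 2[ (2 d_A d_R / d_{A₁}²) ( Tr[(ψ^{AR})²] + 2 Tr[(ψ^A)²] Tr[(ψ^R)²] ) ]^{1/4} ≤ √8 · 2^{−nδ/4}; consequently there exist a unitary U on A = A₁⊗A₂, a Hilbert space B̃ with d_{B̃} = d_{A₂}, and an isometry V : A₁⊗B → (A⊗B)⊗B̃ such that, after reordering tensor factors, ‖ (I⊗V)(I⊗U) ψ (I⊗U)†(I⊗V)† − ψ^{R(AB)} ⊗ Φ^{A₂B̃} ‖₁ ≤ √8 · 2^{−nδ/4}, where ψ^{R(AB)}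 is ψ regarded as a pure state on R tensored with the single system A⊗B. -/

import Mathlib

open Matrix
open scoped Kronecker ComplexOrder

/-- The positive semidefinite square root of a positive semidefinite matrix
(as in the older Mathlib, which no longer has it; here over `ℂ`). -/
noncomputable def Matrix.PosSemidef.sqrt {n : Type*} [Fintype n] [DecidableEq n]
    {A : Matrix n n ℂ} (hA : A.PosSemidef) : Matrix n n ℂ :=
  hA.1.eigenvectorUnitary.1 * Matrix.diagonal ((fun x : ℝ => (x : ℂ)) ∘ Real.sqrt ∘ hA.1.eigenvalues) *
    (star hA.1.eigenvectorUnitary : Matrix n n ℂ)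

/-- Trace norm `‖M‖₁ = Tr √(Mᴴ M)` of a complex square matrix. -/
noncomputable def traceNorm {n : Type*} [Fintype n] [DecidableEq n] (M : Matrix n n ℂ) : ℝ :=
  ((Matrix.posSemidef_conjTranspose_mul_self M).sqrt.trace).re

/-- The unit vector `d^{-1/2} ∑ᵢ |i⟩|i⟩` of the maximally entangled state on `X ⊗ X'`
(with `X' ≅ X`). -/
noncomputable def maxEntVec (α : Type*) [Fintype α] [DecidableEq α] : α × α → ℂ :=
  fun p => if p.1 = p.2 then ((Real.sqrt (Fintype.card α) : ℂ))⁻¹ else 0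

/-- The maximally entangled (pure) state `Φ^{XX'}` on `X ⊗ X'`. -/
noncomputable def maxEntState (α : Type*) [Fintype α] [DecidableEq α] :
    Matrix (α × α) (α × α) ℂ :=
  Matrix.vecMulVec (maxEntVec α) (star (maxEntVec α))

/-- The pure state `|v⟩⟨v|` associated to a vector `v`. -/
noncomputable def pureState {ι : Type*} (v : ι → ℂ) : Matrix ι ι ℂ :=
  Matrix.vecMulVec v (star v)

/-- Reduced state `ψ^{AR}` of a pure state on `R ⊗ (A × B)`; the partial trace over `B`. -/
noncomputable def redAR {ιR ιA ιB : Type} [Fintype ιB]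
    (ψ : ιR × (ιA × ιB) → ℂ) : Matrix (ιA × ιR) (ιA × ιR) ℂ :=
  Matrix.of fun i j => ∑ b : ιB, ψ (i.2, (i.1, b)) * star (ψ (j.2, (j.1, b)))

/-- Reduced state `ψ^{A}` of a pure state on `R ⊗ (A × B)`. -/
noncomputable def redA {ιR ιA ιB : Type} [Fintype ιR] [Fintype ιB]
    (ψ : ιR × (ιA × ιB) → ℂ) : Matrix ιA ιA ℂ :=
  Matrix.of fun i j => ∑ r : ιR, ∑ b : ιB, ψ (r, (i, b)) * star (ψ (r, (j, b)))

/-- Reduced state `ψ^{R}` of a pure state on `R ⊗ (A × B)`. -/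
noncomputable def redR {ιR ιA ιB : Type} [Fintype ιA] [Fintype ιB]
    (ψ : ιR × (ιA × ιB) → ℂ) : Matrix ιR ιR ℂ :=
  Matrix.of fun i j => ∑ q : ιA × ιB, ψ (i, q) * star (ψ (j, q))

/-- Purity `Tr[ρ²]` of a state, as a real number. -/
noncomputable def purity {ι : Type*} [Fintype ι] (ρ : Matrix ι ι ℂ) : ℝ :=
  (ρ * ρ).trace.re

/-- The combined isometry of the FQSW protocol: first `I_{RB} ⊗ U` (with `U : A → A₁A₂`),
then `I_{R A₂} ⊗ V` (with `V : A₁ ⊗ B → (A⊗B) ⊗ B̃` and `B̃` a copy of `A₂`), with the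
output tensor factors reordered as `(R × (A × B)) × (A₂ × B̃)`. -/
noncomputable def fqswMap {ιR ιA₁ ιA₂ ιB : Type} [Fintype ιA₁] [DecidableEq ιR]
    (U : Matrix (ιA₁ × ιA₂) (ιA₁ × ιA₂) ℂ)
    (V : Matrix (((ιA₁ × ιA₂) × ιB) × ιA₂) (ιA₁ × ιB) ℂ) :
    Matrix ((ιR × ((ιA₁ × ιA₂) × ιB)) × (ιA₂ × ιA₂)) (ιR × ((ιA₁ × ιA₂) × ιB)) ℂ :=
  Matrix.of fun p q =>
    if p.1.1 = q.1 then
      ∑ a₁ : ιA₁, V (p.1.2, p.2.2) (a₁, q.2.2) * U (a₁, p.2.1) q.2.1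
    else 0


set_option linter.unusedSectionVars false

namespace FQSW

lemma sqrt_posSemidef {n : Type*} [Fintype n] [DecidableEq n]
    {A : Matrix n n ℂ} (hA : A.PosSemidef) : hA.sqrt.PosSemidef := by
  unfold Matrix.PosSemidef.sqrt
  have hd : (Matrix.diagonal ((fun x : ℝ => (x : ℂ)) ∘ Real.sqrt ∘ hA.1.eigenvalues)).PosSemidef := by
    apply Matrix.PosSemidef.diagonal
    intro i
    simp only [Pi.zero_apply, Function.comp_apply]
    exact_mod_cast Real.sqrt_nonneg _
  have := hd.mul_mul_conjTranspose_same (hA.1.eigenvectorUnitary.1)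
  simpa [Matrix.star_eq_conjTranspose] using this

lemma sqrt_mul_self {n : Type*} [Fintype n] [DecidableEq n]
    {A : Matrix n n ℂ} (hA : A.PosSemidef) : hA.sqrt * hA.sqrt = A := by
  conv_rhs => rw [hA.1.spectral_theorem]
  unfold Matrix.PosSemidef.sqrt
  rw [Unitary.conjStarAlgAut_apply]
  have hU : (star hA.1.eigenvectorUnitary : Matrix n n ℂ) * hA.1.eigenvectorUnitary.1 = 1 :=
    Unitary.coe_star_mul_self _
  have hD : Matrix.diagonal ((fun x : ℝ => (x : ℂ)) ∘ Real.sqrt ∘ hA.1.eigenvalues) *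
      Matrix.diagonal ((fun x : ℝ => (x : ℂ)) ∘ Real.sqrt ∘ hA.1.eigenvalues)
      = Matrix.diagonal (RCLike.ofReal ∘ hA.1.eigenvalues) := by
    rw [Matrix.diagonal_mul_diagonal]
    congr 1
    funext i
    simp only [Function.comp_apply]
    rw [← Complex.ofReal_mul, Real.mul_self_sqrt (hA.eigenvalues_nonneg i)]
    rfl
  calc _ = hA.1.eigenvectorUnitary.1 * Matrix.diagonal ((fun x : ℝ => (x : ℂ)) ∘ Real.sqrt ∘ hA.1.eigenvalues) *
    ((star hA.1.eigenvectorUnitary : Matrix n n ℂ) * hA.1.eigenvectorUnitary.1) * Matrix.diagonal ((fun x : ℝ => (x : ℂ)) ∘ Real.sqrt ∘ hA.1.eigenvalues) * (star hA.1.eigenvectorUnitary : Matrix n n ℂ) := by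
        simp only [Matrix.mul_assoc]
    _ = _ := by
        rw [hU, Matrix.mul_one, Matrix.mul_assoc _ (Matrix.diagonal _) (Matrix.diagonal _), hD]

lemma traceNorm_sq_le {n : Type*} [Fintype n] [DecidableEq n] (M : Matrix n n ℂ) :
    (traceNorm M) ^ 2 ≤ M.rank * (Mᴴ * M).trace.re := by
  have hP := Matrix.posSemidef_conjTranspose_mul_self M
  have h1 : traceNorm M = ∑ i, Real.sqrt (hP.1.eigenvalues i) := by
    unfold traceNorm Matrix.PosSemidef.sqrt
    rw [Matrix.trace_mul_cycle, Unitary.coe_star_mul_self, Matrix.one_mul, Matrix.trace_diagonal]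
    simp
  have h2 : (Mᴴ * M).trace.re = ∑ i, hP.1.eigenvalues i := by
    rw [hP.1.trace_eq_sum_eigenvalues]; simp
  have h3 : M.rank = (Finset.univ.filter (fun i => hP.1.eigenvalues i ≠ 0)).card := by
    rw [← Matrix.rank_conjTranspose_mul_self, hP.1.rank_eq_card_non_zero_eigs, Fintype.card_subtype]
  rw [h1, h2, h3]
  rw [← Finset.sum_filter_of_ne (p := fun i => hP.1.eigenvalues i ≠ 0) (f := fun i => Real.sqrt (hP.1.eigenvalues i))]
  · refine sq_sum_le_card_mul_sum_sq.trans ?_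
    gcongr
    calc _ = ∑ i ∈ Finset.univ.filter (fun i => hP.1.eigenvalues i ≠ 0), hP.1.eigenvalues i := by
          refine Finset.sum_congr rfl fun i _ => Real.sq_sqrt (hP.eigenvalues_nonneg i)
      _ ≤ _ := Finset.sum_le_sum_of_subset_of_nonneg (Finset.filter_subset _ _)
          fun i _ _ => hP.eigenvalues_nonneg i
  · intro i _ h h0
    simp [h0] at h

lemma rank_diff_le {n : Type*} [Fintype n] [DecidableEq n] (x y : n → ℂ) :
    (pureState x - pureState y).rank ≤ 2 := by
  have : pureState x - pureState y
      = (Matrix.of fun i (k : Fin 2) => if k = 0 then x i else - y i) *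
        (Matrix.of fun (k : Fin 2) j => if k = 0 then star (x j) else star (y j)) := by
    ext i j
    simp [pureState, Matrix.vecMulVec_apply, Matrix.mul_apply, sub_eq_add_neg]
  rw [this]
  refine (Matrix.rank_mul_le_left _ _).trans ?_
  refine (Matrix.rank_le_card_width _).trans ?_
  simp

lemma traceNorm_pure_le {n : Type*} [Fintype n] [DecidableEq n] (x y : n → ℂ)
    (hx : star x ⬝ᵥ x = 1) (hy : star y ⬝ᵥ y = 1) (ε : ℝ)
    (h : 1 - ε / 2 ≤ (star y ⬝ᵥ x).re) :
    traceNorm (pureState x - pureState y) ≤ 2 * Real.sqrt ε := by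
  have key : ((pureState x - pureState y)ᴴ * (pureState x - pureState y)).trace
      = 2 - 2 * (star y ⬝ᵥ x) * star (star y ⬝ᵥ x) := by
    have hst : star (star y ⬝ᵥ x) = star x ⬝ᵥ y := by
      rw [Matrix.star_dotProduct, star_star]
    rw [hst]
    simp only [pureState, Matrix.conjTranspose_sub, Matrix.conjTranspose_vecMulVec, star_star,
      Matrix.sub_mul, Matrix.mul_sub, Matrix.vecMulVec_mul_vecMulVec, Matrix.trace_sub,
      Matrix.trace_vecMulVec, hx, hy]
    simp only [dotProduct_smul, dotProduct_comm _ (star _), hx, hy, smul_eq_mul]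
    simp
    have h1 := hx
    have h2 := hy
    ring
  set c := star y ⬝ᵥ x with hc
  have h1 : (traceNorm (pureState x - pureState y)) ^ 2 ≤ 4 * ε := by
    refine (traceNorm_sq_le _).trans ?_
    rw [key]
    have hre : (2 - 2 * c * star c).re = 2 - 2 * (c.re ^ 2 + c.im ^ 2) := by
      simp [Complex.mul_re]; ring
    have hr : ((pureState x - pureState y).rank : ℝ) ≤ 2 := by exact_mod_cast rank_diff_le x y
    have hnn : 0 ≤ (2 - 2 * c * star c).re := by
      rw [← key]
      exact (Complex.nonneg_iff.1 (Matrix.posSemidef_conjTranspose_mul_self _).trace_nonneg).1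
    calc _ ≤ 2 * (2 - 2 * c * star c).re := by gcongr
      _ ≤ _ := by rw [hre]; nlinarith [sq_nonneg (1 - c.re), sq_nonneg c.im]
  calc _ ≤ Real.sqrt ((traceNorm (pureState x - pureState y)) ^ 2) := Real.le_sqrt_of_sq_le le_rfl
    _ ≤ Real.sqrt (4 * ε) := Real.sqrt_le_sqrt h1
    _ = _ := by
      rw [Real.sqrt_mul (by norm_num)]
      congr 1
      rw [show (4:ℝ) = 2 ^ 2 by norm_num, Real.sqrt_sq (by norm_num)]

/-- Powers–Størmer type inequality with the Hilbert–Schmidt norm. -/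
lemma powers_stormer {p : Type*} [Fintype p] [DecidableEq p] {A B : Matrix p p ℂ}
    (hA : A.PosSemidef) (hB : B.PosSemidef) :
    ((A - B) * (A - B)).trace.re ^ 2 ≤
      Fintype.card p * ((A * A - B * B) * (A * A - B * B)).trace.re := by
  have hH : (A - B).IsHermitian := hA.1.sub hB.1
  set W : Matrix p p ℂ := hH.eigenvectorUnitary.1 with hW
  set lam := hH.eigenvalues with hlam
  have hWW : W * Wᴴ = 1 := Unitary.coe_mul_star_self hH.eigenvectorUnitary
  have hWW' : Wᴴ * W = 1 := Unitary.coe_star_mul_self hH.eigenvectorUnitary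
  set A' := Wᴴ * A * W with hA'
  set B' := Wᴴ * B * W with hB'
  have pA : A'.PosSemidef := hA.conjTranspose_mul_mul_same W
  have pB : B'.PosSemidef := hB.conjTranspose_mul_mul_same W
  have conj_mul : ∀ X Y : Matrix p p ℂ, Wᴴ * (X * Y) * W = (Wᴴ * X * W) * (Wᴴ * Y * W) := by
    intro X Y
    calc _ = Wᴴ * X * 1 * Y * W := by simp only [Matrix.mul_assoc, Matrix.one_mul]
      _ = _ := by rw [← hWW]; simp only [Matrix.mul_assoc]
  have tr_conj : ∀ X : Matrix p p ℂ, (Wᴴ * X * W).trace = X.trace := by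
    intro X
    rw [Matrix.trace_mul_cycle, hWW, Matrix.one_mul]
  have hD : A' - B' = Matrix.diagonal (fun i => (lam i : ℂ)) := by
    rw [hA', hB', ← Matrix.sub_mul, ← Matrix.mul_sub]
    have := hH.spectral_theorem
    rw [Unitary.conjStarAlgAut_apply] at this
    conv_lhs => rw [this]
    change Wᴴ * (W * _ * Wᴴ) * W = _
    calc _ = (Wᴴ * W) * Matrix.diagonal (RCLike.ofReal ∘ hH.eigenvalues) * (Wᴴ * W) := by
          simp only [Matrix.mul_assoc]
      _ = _ := by rw [hWW', Matrix.one_mul, Matrix.mul_one]; rfl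
  set Δ := A' * A' - B' * B' with hΔ
  have hΔ2 : 2 • Δ = (A' - B') * (A' + B') + (A' + B') * (A' - B') := by
    rw [hΔ]; noncomm_ring
  have hdiag : ∀ i, Δ i i = lam i * (A' i i + B' i i) := by
    intro i
    have := congrFun (congrFun hΔ2 i) i
    rw [hD] at this
    simp only [Matrix.smul_apply, Matrix.add_apply, Matrix.diagonal_mul, Matrix.mul_diagonal] at this
    simp only [nsmul_eq_mul, Nat.cast_ofNat] at this
    linear_combination this / 2
  have hbound : ∀ i, lam i ^ 2 ≤ ‖Δ i i‖ := by
    intro i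
    have a0 := pA.diag_nonneg (i := i)
    have b0 := pB.diag_nonneg (i := i)
    obtain ⟨a0, a1⟩ := Complex.nonneg_iff.1 a0
    obtain ⟨b0, b1⟩ := Complex.nonneg_iff.1 b0
    have hl : lam i = (A' i i).re - (B' i i).re := by
      have := congrFun (congrFun hD i) i
      simp only [Matrix.sub_apply, Matrix.diagonal_apply_eq] at this
      have := congrArg Complex.re this
      simpa using this.symm
    calc lam i ^ 2 ≤ |lam i * ((A' i i).re + (B' i i).re)| := by
          rw [abs_mul, abs_of_nonneg (add_nonneg a0 b0), ← sq_abs, sq]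
          gcongr
          rw [hl, abs_le]; constructor <;> linarith
      _ = |(Δ i i).re| := by rw [hdiag i]; simp
      _ ≤ _ := Complex.abs_re_le_norm _
  have hΔH : Δᴴ = Δ := by
    rw [hΔ, Matrix.conjTranspose_sub, Matrix.conjTranspose_mul A' A', Matrix.conjTranspose_mul B' B', pA.1.eq, pB.1.eq]
  have e1 : ((A - B) * (A - B)).trace.re = ∑ i, lam i ^ 2 := by
    rw [← tr_conj, conj_mul, Matrix.mul_sub, Matrix.sub_mul, ← hA', ← hB', hD, Matrix.diagonal_mul_diagonal,
      Matrix.trace_diagonal]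
    simp [sq]
  have e2 : ((A * A - B * B) * (A * A - B * B)).trace.re = ∑ i, ∑ j, ‖Δ i j‖ ^ 2 := by
    rw [← tr_conj, conj_mul, Matrix.mul_sub, Matrix.sub_mul, conj_mul, conj_mul, ← hA', ← hB', ← hΔ]
    conv_lhs => enter [1, 1, 1]; rw [← hΔH]
    simp only [Matrix.trace, Matrix.diag, Matrix.mul_apply, Matrix.conjTranspose_apply, Complex.re_sum]
    rw [Finset.sum_comm]
    refine Finset.sum_congr rfl fun i _ => Finset.sum_congr rfl fun j _ => ?_
    rw [← Complex.normSq_eq_norm_sq, Complex.normSq_apply]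
    simp [Complex.mul_re]
  rw [e1, e2]
  calc (∑ i, lam i ^ 2) ^ 2 ≤ (∑ i, ‖Δ i i‖) ^ 2 := by
        gcongr with i
        · exact hbound i
    _ ≤ Fintype.card p * ∑ i, ‖Δ i i‖ ^ 2 := sq_sum_le_card_mul_sum_sq
    _ ≤ _ := by
      gcongr with i
      exact Finset.single_le_sum (f := fun j => ‖Δ i j‖ ^ 2) (fun j _ => by positivity) (Finset.mem_univ i)

end FQSW

namespace FQSW

lemma inner_toEuclideanLin {m q : Type*} [Fintype m] [DecidableEq m] [Fintype q] [DecidableEq q]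
    (Z : Matrix m q ℂ) (x y : EuclideanSpace ℂ q) :
    inner ℂ (Matrix.toEuclideanLin Z x) (Matrix.toEuclideanLin Z y)
      = star x.ofLp ⬝ᵥ ((Zᴴ * Z) *ᵥ y.ofLp) := by
  rw [← Matrix.mulVec_mulVec, Matrix.dotProduct_mulVec, ← Matrix.star_mulVec, dotProduct_comm]
  rfl

lemma gram_square {m q : Type*} [Fintype m] [DecidableEq m] [Fintype q] [DecidableEq q]
    (X Y : Matrix m q ℂ) (h : Xᴴ * X = Yᴴ * Y) :
    ∃ W : Matrix m m ℂ, Wᴴ * W = 1 ∧ Y = W * X := by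
  set LX := Matrix.toEuclideanLin X with hLX
  set LY := Matrix.toEuclideanLin Y with hLY
  have normeq : ∀ x, ‖LY x‖ = ‖LX x‖ := by
    intro x
    have e := inner_toEuclideanLin X x x
    rw [h, ← inner_toEuclideanLin, inner_self_eq_norm_sq_to_K, inner_self_eq_norm_sq_to_K] at e
    have h2 : ((‖LY x‖ ^ 2 : ℝ) : ℂ) = ((‖LX x‖ ^ 2 : ℝ) : ℂ) := by
      push_cast; exact e.symm
    have h3 : ‖LY x‖ ^ 2 = ‖LX x‖ ^ 2 := by exact_mod_cast h2
    exact (sq_eq_sq₀ (norm_nonneg _) (norm_nonneg _)).1 h3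
  have hker : LinearMap.ker LX ≤ LinearMap.ker LY := by
    intro x hx
    rw [LinearMap.mem_ker] at hx ⊢
    rw [← norm_eq_zero, normeq, hx, norm_zero]
  let L0 : LinearMap.range LX →ₗ[ℂ] EuclideanSpace ℂ m :=
    ((LinearMap.ker LX).liftQ LY hker) ∘ₗ LX.quotKerEquivRange.symm.toLinearMap
  have hL0 : ∀ x (hx : LX x ∈ LinearMap.range LX), L0 ⟨LX x, hx⟩ = LY x := by
    intro x hx
    simp only [L0, LinearMap.comp_apply, LinearEquiv.coe_coe]
    rw [LinearMap.quotKerEquivRange_symm_apply_image]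
    rfl
  let L : LinearMap.range LX →ₗᵢ[ℂ] EuclideanSpace ℂ m :=
    { toLinearMap := L0
      norm_map' := by
        rintro ⟨y, hy⟩
        obtain ⟨x, rfl⟩ := LinearMap.mem_range.1 hy
        rw [hL0, normeq]; rfl }
  let E := L.extend
  let W := Matrix.toEuclideanLin.symm E.toLinearMap
  have hW : Matrix.toEuclideanLin W = E.toLinearMap := by simp [W]
  refine ⟨W, ?_, ?_⟩
  · ext i j
    have := E.inner_map_map (EuclideanSpace.single i 1) (EuclideanSpace.single j 1)
    have e : ∀ k, E (EuclideanSpace.single k 1) = Matrix.toEuclideanLin W (EuclideanSpace.single k 1) := by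
      intro k; rw [hW]; rfl
    rw [e, e, inner_toEuclideanLin] at this
    have e2 : star (EuclideanSpace.single i (1:ℂ)).ofLp ⬝ᵥ ((Wᴴ * W) *ᵥ (EuclideanSpace.single j (1:ℂ)).ofLp)
        = (Wᴴ * W) i j := by
      rw [PiLp.ofLp_single, PiLp.ofLp_single, ← Pi.single_star, star_one,
        Matrix.mulVec_single_one, single_one_dotProduct]
      rfl
    rw [← e2, this, Matrix.one_apply]
    rw [EuclideanSpace.inner_single_left]
    simp
  · apply Matrix.toEuclideanLin.injective
    ext1 x
    have h1 : Matrix.toEuclideanLin (W * X) x = Matrix.toEuclideanLin W (LX x) := by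
      rw [hLX]; simp [Matrix.toEuclideanLin]
    rw [h1, hW]
    change LY x = L.extend (LX x)
    have h2 := L.extend_apply ⟨LX x, LinearMap.mem_range_self LX x⟩
    rw [h2]
    exact (hL0 x _).symm

lemma exists_isom {k m : Type*} [Fintype m] [DecidableEq m] [Fintype k] [DecidableEq k]
    (hc : Fintype.card k ≤ Fintype.card m) :
    ∃ E : Matrix m k ℂ, Eᴴ * E = 1 := by
  obtain ⟨e⟩ := Function.Embedding.nonempty_of_card_le hc
  refine ⟨Matrix.of fun y i => if y = e i then 1 else 0, ?_⟩
  ext i j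
  simp [Matrix.mul_apply, Matrix.one_apply, eq_comm]

lemma gram {k m q : Type*} [Fintype m] [DecidableEq m] [Fintype q] [DecidableEq q]
    [Fintype k] [DecidableEq k] (hc : Fintype.card k ≤ Fintype.card m)
    (X : Matrix k q ℂ) (Y : Matrix m q ℂ) (h : Xᴴ * X = Yᴴ * Y) :
    ∃ W : Matrix m k ℂ, Wᴴ * W = 1 ∧ Y = W * X := by
  obtain ⟨E, hE⟩ := exists_isom (k := k) (m := m) hc
  obtain ⟨W, hW, hY⟩ := gram_square (E * X) Y (by
    rw [Matrix.conjTranspose_mul, Matrix.mul_assoc, ← Matrix.mul_assoc Eᴴ, hE, Matrix.one_mul, h])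
  refine ⟨W * E, ?_, by rw [hY, Matrix.mul_assoc]⟩
  rw [Matrix.conjTranspose_mul, Matrix.mul_assoc, ← Matrix.mul_assoc Wᴴ, hW, Matrix.one_mul, hE]

/-- Squared Hilbert–Schmidt norm. -/
noncomputable def hs {m n : Type*} [Fintype m] [Fintype n] (X : Matrix m n ℂ) : ℝ :=
  (Xᴴ * X).trace.re

lemma hs_nonneg {m n : Type*} [Fintype m] [Fintype n] (X : Matrix m n ℂ) : 0 ≤ hs X :=
  (Complex.nonneg_iff.1 (Matrix.posSemidef_conjTranspose_mul_self X).trace_nonneg).1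

lemma hs_eq_sum {m n : Type*} [Fintype m] [Fintype n] (X : Matrix m n ℂ) :
    hs X = ∑ j, ∑ i, ‖X i j‖ ^ 2 := by
  unfold hs
  simp only [Matrix.trace, Matrix.diag, Matrix.mul_apply, Matrix.conjTranspose_apply, Complex.re_sum]
  refine Finset.sum_congr rfl fun i _ => Finset.sum_congr rfl fun j _ => ?_
  rw [← Complex.normSq_eq_norm_sq, Complex.normSq_apply]
  simp [Complex.mul_re]

lemma hs_conjTranspose {m n : Type*} [Fintype m] [Fintype n] (X : Matrix m n ℂ) :
    hs Xᴴ = hs X := by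
  rw [hs_eq_sum, hs_eq_sum, Finset.sum_comm]
  simp

lemma hs_isom_mul {m n k : Type*} [Fintype m] [Fintype n] [Fintype k] [DecidableEq k]
    (W : Matrix m k ℂ) (hW : Wᴴ * W = 1) (X : Matrix k n ℂ) : hs (W * X) = hs X := by
  unfold hs
  rw [Matrix.conjTranspose_mul, Matrix.mul_assoc, ← Matrix.mul_assoc Wᴴ, hW, Matrix.one_mul]

lemma hs_conj_isom_mul_le {m n k : Type*} [Fintype m] [Fintype n] [Fintype k] [DecidableEq k]
    (W : Matrix m k ℂ) (hW : Wᴴ * W = 1) (X : Matrix m n ℂ) : hs (Wᴴ * X) ≤ hs X := by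
  have h0 := hs_nonneg (X - W * (Wᴴ * X))
  have : (X - W * (Wᴴ * X))ᴴ * (X - W * (Wᴴ * X)) = Xᴴ * X - (Wᴴ * X)ᴴ * (Wᴴ * X) := by
    simp only [Matrix.conjTranspose_sub, Matrix.conjTranspose_mul, Matrix.conjTranspose_conjTranspose,
      Matrix.sub_mul, Matrix.mul_sub]
    have : Xᴴ * W * Wᴴ * (W * (Wᴴ * X)) = Xᴴ * W * (Wᴴ * X) := by
      calc _ = Xᴴ * W * (Wᴴ * W) * (Wᴴ * X) := by simp only [Matrix.mul_assoc]
        _ = _ := by rw [hW, Matrix.mul_one]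
    rw [this]
    simp only [Matrix.mul_assoc]
    abel
  unfold hs at h0 ⊢
  rw [this, Matrix.trace_sub, Complex.sub_re] at h0
  linarith

lemma re_trace_le_hs {m n : Type*} [Fintype m] [Fintype n] (X Y : Matrix m n ℂ) :
    2 * (Xᴴ * Y).trace.re ≤ hs X + hs Y := by
  have h0 := hs_nonneg (X - Y)
  have h1 : (Yᴴ * X).trace.re = (Xᴴ * Y).trace.re := by
    rw [← Matrix.conjTranspose_conjTranspose X, ← Matrix.conjTranspose_mul, Matrix.trace_conjTranspose]
    simp
  unfold hs at *
  simp only [Matrix.conjTranspose_sub, Matrix.sub_mul, Matrix.mul_sub, Matrix.trace_sub, Complex.sub_re] at h0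
  linarith

/-- A purification factors through the square root by a contraction. -/
lemma purif {p n : Type*} [Fintype p] [DecidableEq p] [Fintype n] [DecidableEq n]
    (M : Matrix p n ℂ) (A : Matrix p p ℂ) (hA : A.IsHermitian) (h : A * A = M * Mᴴ) :
    ∃ W : Matrix n p ℂ, A = M * W ∧ ∀ {q : Type _} [Fintype q] (X : Matrix n q ℂ), hs (Wᴴ * X) ≤ hs X := by
  obtain ⟨W, hW, hY⟩ := gram (k := p) (m := p ⊕ n) (by simp) A (Matrix.fromRows 0 Mᴴ) (by
    rw [hA.eq, h, Matrix.conjTranspose_fromRows_eq_fromCols_conjTranspose, Matrix.fromCols_mul_fromRows]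
    simp)
  have hWr : W = Matrix.fromRows W.toRows₁ W.toRows₂ := (Matrix.fromRows_toRows W).symm
  refine ⟨W.toRows₂, ?_, ?_⟩
  · have h1 : A = Wᴴ * Matrix.fromRows (0 : Matrix p p ℂ) Mᴴ := by
      rw [hY, ← Matrix.mul_assoc, hW, Matrix.one_mul]
    rw [hWr, Matrix.conjTranspose_fromRows_eq_fromCols_conjTranspose, Matrix.fromCols_mul_fromRows] at h1
    rw [← hA.eq, h1]
    simp [Matrix.conjTranspose_mul]
  · intro q _ X
    have h2 := hs_conj_isom_mul_le W hW (Matrix.fromRows (0 : Matrix p q ℂ) X)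
    have h3 : Wᴴ * (Matrix.fromRows (0 : Matrix p q ℂ) X) = W.toRows₂ᴴ * X := by
      conv_lhs => rw [hWr, Matrix.conjTranspose_fromRows_eq_fromCols_conjTranspose, Matrix.fromCols_mul_fromRows]
      simp
    have h4 : hs (Matrix.fromRows (0 : Matrix p q ℂ) X) = hs X := by
      rw [hs_eq_sum, hs_eq_sum]; simp
    rwa [h3, h4] at h2

/-- Uhlmann's theorem, in the form needed. -/
lemma uhlmann {p n m : Type} [Fintype p] [DecidableEq p] [Fintype n] [DecidableEq n]
    [Fintype m] [DecidableEq m] (hc : Fintype.card n ≤ Fintype.card m)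
    (M₁ : Matrix p n ℂ) (M₂ : Matrix p m ℂ) (A B : Matrix p p ℂ)
    (hA : A.IsHermitian) (hB : B.IsHermitian)
    (h1 : A * A = M₁ * M₁ᴴ) (h2 : B * B = M₂ * M₂ᴴ) :
    ∃ W : Matrix m n ℂ, Wᴴ * W = 1 ∧ (B * A).trace.re ≤ (M₂ᴴ * M₁ * Wᴴ).trace.re := by
  obtain ⟨W₁, hA1, hW1⟩ := purif M₁ A hA h1
  obtain ⟨W₂, hB2, hW2⟩ := purif M₂ B hB h2
  have hP := Matrix.posSemidef_conjTranspose_mul_self (M₂ᴴ * M₁)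
  set P := hP.sqrt with hPdef
  have pP : P.PosSemidef := sqrt_posSemidef hP
  set Q := pP.sqrt with hQdef
  have pQ : Q.PosSemidef := sqrt_posSemidef pP
  have hPP : P * P = (M₂ᴴ * M₁)ᴴ * (M₂ᴴ * M₁) := sqrt_mul_self hP
  have hQQ : Q * Q = P := sqrt_mul_self pP
  obtain ⟨W, hW, hN⟩ := gram hc P (M₂ᴴ * M₁) (by rw [pP.1.eq, hPP])
  refine ⟨W, hW, ?_⟩
  have hR : (M₂ᴴ * M₁ * Wᴴ).trace = (Q * Q).trace := by
    rw [hN, Matrix.trace_mul_cycle, hW, Matrix.one_mul, hQQ]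
  have hL : (B * A).trace = ((W₁ᴴ * Q)ᴴ * (W₂ᴴ * (W * Q))).trace := by
    have : B * A = W₂ᴴ * (W * P) * W₁ := by
      conv_lhs => rw [← hB.eq, hB2, hA1]
      rw [Matrix.conjTranspose_mul, ← hN]
      simp only [Matrix.mul_assoc]
    rw [this, Matrix.trace_mul_comm, ← hQQ]
    rw [Matrix.conjTranspose_mul, Matrix.conjTranspose_conjTranspose, pQ.1.eq]
    rw [← Matrix.mul_assoc W, ← Matrix.mul_assoc W₂ᴴ, ← Matrix.mul_assoc W₁, Matrix.trace_mul_comm]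
    simp only [Matrix.mul_assoc]
  have hq : hs Q = (Q * Q).trace.re := by unfold hs; rw [pQ.1.eq]
  have e := re_trace_le_hs (W₁ᴴ * Q) (W₂ᴴ * (W * Q))
  have e1 := hW1 Q
  have e2 := hW2 (W * Q)
  rw [hs_isom_mul W hW] at e2
  rw [hL, hR, ← hq]
  linarith

/-- Uhlmann combined with Powers–Størmer. -/
lemma uhlmann_ps {p n m : Type} [Fintype p] [DecidableEq p] [Fintype n] [DecidableEq n]
    [Fintype m] [DecidableEq m] (hc : Fintype.card n ≤ Fintype.card m)
    (M₁ : Matrix p n ℂ) (M₂ : Matrix p m ℂ) (t1 : hs M₁ = 1) (t2 : hs M₂ = 1) (ε : ℝ) (hε : 0 ≤ ε)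
    (h : Fintype.card p * ((M₁ * M₁ᴴ - M₂ * M₂ᴴ) * (M₁ * M₁ᴴ - M₂ * M₂ᴴ)).trace.re ≤ ε ^ 2) :
    ∃ W : Matrix m n ℂ, Wᴴ * W = 1 ∧ 1 - ε / 2 ≤ (M₂ᴴ * M₁ * Wᴴ).trace.re := by
  have p1 := Matrix.posSemidef_self_mul_conjTranspose M₁
  have p2 := Matrix.posSemidef_self_mul_conjTranspose M₂
  have q1 := sqrt_posSemidef p1
  have q2 := sqrt_posSemidef p2
  obtain ⟨W, hW, hle⟩ := uhlmann hc M₁ M₂ p1.sqrt p2.sqrt q1.1 q2.1 (sqrt_mul_self p1) (sqrt_mul_self p2)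
  refine ⟨W, hW, le_trans ?_ hle⟩
  have ps := powers_stormer q1 q2
  rw [sqrt_mul_self, sqrt_mul_self] at ps
  have := abs_le_of_sq_le_sq (ps.trans h) hε
  have e : ((p1.sqrt - p2.sqrt) * (p1.sqrt - p2.sqrt)).trace.re = 2 - 2 * (p2.sqrt * p1.sqrt).trace.re := by
    rw [Matrix.mul_sub, Matrix.sub_mul, Matrix.sub_mul, sqrt_mul_self, sqrt_mul_self]
    simp only [Matrix.trace_sub, Complex.sub_re]
    rw [Matrix.trace_mul_comm p1.sqrt p2.sqrt, Matrix.trace_mul_comm M₁, Matrix.trace_mul_comm M₂]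
    change hs M₁ - _ - (_ - hs M₂) = _
    rw [t1, t2]; ring
  rw [e] at this
  linarith [(abs_le.1 this).2]

end FQSW

namespace FQSW

/-- cube-root-of-unity phases -/
noncomputable def ph (x : ZMod 3) : ℂ := ZMod.stdAddChar x

lemma star_ph (x : ZMod 3) : star (ph x) = ph (-x) := by
  unfold ph
  rw [AddChar.map_neg_eq_conj]; rfl

lemma ph_add (x y : ZMod 3) : ph (x + y) = ph x * ph y := AddChar.map_add_eq_mul _ _ _

lemma ph_mul_star (x : ZMod 3) : star (ph x) * ph x = 1 := by
  rw [star_ph, ← ph_add]; simp [ph]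

lemma ph_four (x y z w : ZMod 3) : ph x * star (ph y) * ph z * star (ph w) = ph (x - y + z - w) := by
  rw [star_ph, star_ph, ← ph_add, ← ph_add, ← ph_add]; congr 1; ring

lemma phase_sum {ι : Type*} [Fintype ι] [DecidableEq ι] (i j k l : ι) :
    ∑ θ : ι → ZMod 3, ph (θ i - θ j + θ k - θ l)
      = if (i = j ∧ k = l) ∨ (i = l ∧ j = k) then (3 : ℂ) ^ Fintype.card ι else 0 := by
  split_ifs with h
  · have : ∀ θ : ι → ZMod 3, ph (θ i - θ j + θ k - θ l) = 1 := by
      intro θ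
      have : θ i - θ j + θ k - θ l = 0 := by
        rcases h with ⟨rfl, rfl⟩ | ⟨rfl, rfl⟩ <;> ring
      rw [this]; simp [ph]
    simp [this]
  · let f : (ι → ZMod 3) →+ ZMod 3 :=
      { toFun := fun θ => θ i - θ j + θ k - θ l
        map_zero' := by simp
        map_add' := by intro x y; simp only [Pi.add_apply]; ring }
    let χ : AddChar (ι → ZMod 3) ℂ := (ZMod.stdAddChar (N := 3)).compAddMonoidHom f
    change ∑ θ, χ θ = 0
    rw [AddChar.sum_eq_zero_iff_ne_zero]
    intro h0
    have hf : ∀ θ, f θ = 0 := by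
      intro θ
      have h1 : ZMod.stdAddChar (N := 3) (f θ) = 1 := by
        have := DFunLike.congr_fun h0 θ
        simpa [χ] using this
      apply ZMod.injective_stdAddChar
      rw [h1]; simp
    have hf' : ∀ m, (if i = m then (1 : ZMod 3) else 0) - (if j = m then 1 else 0)
        + (if k = m then 1 else 0) - (if l = m then 1 else 0) = 0 := by
      intro m
      have := hf (Pi.single m 1)
      simpa [f, Pi.single_apply] using this
    have hi := hf' i
    have hk := hf' k
    have d2 : (1 + 1 : ZMod 3) ≠ 0 := by decide
    by_cases hij : i = j
    · subst hij
      have hkl : k ≠ l := fun e => h (Or.inl ⟨rfl, e⟩)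
      simp [hkl.symm] at hk
    · by_cases hil : i = l
      · subst hil
        have hjk : j ≠ k := fun e => h (Or.inr ⟨rfl, e⟩)
        simp [hjk] at hk
      · simp [Ne.symm hij, Ne.symm hil] at hi
        split_ifs at hi
        · exact d2 hi
        · simp at hi

lemma phase_avg {ι : Type*} [Fintype ι] [DecidableEq ι] (f : ι → ι → ι → ι → ℂ) :
    ∑ θ : ι → ZMod 3, ∑ i, ∑ j, ∑ k, ∑ l, ph (θ i - θ j + θ k - θ l) * f i j k l
      = (3 : ℂ) ^ Fintype.card ι *
        (∑ i, ∑ k, f i i k k + ∑ i, ∑ k, f i k k i - ∑ i, f i i i i) := by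
  have h1 : ∑ θ : ι → ZMod 3, ∑ i, ∑ j, ∑ k, ∑ l, ph (θ i - θ j + θ k - θ l) * f i j k l
      = ∑ i, ∑ j, ∑ k, ∑ l, (∑ θ : ι → ZMod 3, ph (θ i - θ j + θ k - θ l)) * f i j k l := by
    simp only [Finset.sum_mul]
    rw [Finset.sum_comm]; refine Finset.sum_congr rfl fun i _ => ?_
    rw [Finset.sum_comm]; refine Finset.sum_congr rfl fun j _ => ?_
    rw [Finset.sum_comm]; refine Finset.sum_congr rfl fun k _ => ?_
    rw [Finset.sum_comm]
  rw [h1]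
  have h2 : ∀ i j k l : ι, (∑ θ : ι → ZMod 3, ph (θ i - θ j + θ k - θ l)) * f i j k l
      = (3 : ℂ) ^ Fintype.card ι * ((if i = j then (if k = l then f i j k l else 0) else 0)
        + (if i = l then (if j = k then f i j k l else 0) else 0)
        - (if i = j then (if k = l then (if i = l then f i j k l else 0) else 0) else 0)) := by
    intro i j k l
    rw [phase_sum]
    by_cases a : i = j <;> by_cases b : k = l <;> by_cases c : i = l <;> by_cases d : j = k <;>
      simp [a, b, c, d] <;> simp_all
  simp only [h2, ← Finset.mul_sum]
  congr 1
  simp only [Finset.sum_add_distrib, Finset.sum_sub_distrib]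
  congr 1
  · congr 1
    · refine Finset.sum_congr rfl fun i _ => ?_
      rw [Finset.sum_eq_single i (by intro j _ hj; simp [Ne.symm hj]) (by simp)]
      simp
    · refine Finset.sum_congr rfl fun i _ => ?_
      refine Finset.sum_congr rfl fun j _ => ?_
      rw [Finset.sum_eq_single j (by intro k _ hk; simp [Ne.symm hk]) (by simp)]
      simp
  · refine Finset.sum_congr rfl fun i _ => ?_
    rw [Finset.sum_eq_single i (by intro j _ hj; simp [Ne.symm hj]) (by simp)]
    rw [Finset.sum_eq_single i (by intro j _ hj; simp; rintro rfl; exact absurd rfl hj) (by simp)]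
    simp

lemma perm_transfer {ι : Type*} [Fintype ι] [DecidableEq ι] (g : ι → ι → ℂ) (τ : Equiv.Perm ι) (i k : ι) :
    ∑ π : Equiv.Perm ι, g (π (τ i)) (π (τ k)) = ∑ π : Equiv.Perm ι, g (π i) (π k) := by
  exact Fintype.sum_equiv (Equiv.mulRight τ) _ _ (fun π => rfl)

lemma exists_perm {ι : Type*} [DecidableEq ι] {i k i' k' : ι} (h : i ≠ k) (h' : i' ≠ k') :
    ∃ τ : Equiv.Perm ι, τ i = i' ∧ τ k = k' := by
  refine ⟨Equiv.swap (Equiv.swap i i' k) k' * Equiv.swap i i', ?_, ?_⟩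
  · rw [Equiv.Perm.mul_apply, Equiv.swap_apply_left, Equiv.swap_apply_of_ne_of_ne _ h']
    intro e
    have : Equiv.swap i i' i = Equiv.swap i i' k := by rw [Equiv.swap_apply_left]; exact e
    exact h ((Equiv.swap i i').injective this)
  · rw [Equiv.Perm.mul_apply, Equiv.swap_apply_left]

lemma sum_offdiag {ι : Type*} [Fintype ι] [DecidableEq ι] (g : ι → ι → ℂ) :
    ∑ i, ∑ k, (if i = k then 0 else g i k) = ∑ i, ∑ k, g i k - ∑ i, g i i := by
  rw [← Finset.sum_sub_distrib]
  refine Finset.sum_congr rfl fun i _ => ?_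
  rw [eq_sub_iff_add_eq]
  have : g i i = ∑ k, if i = k then g i k else 0 := by simp
  rw [this, ← Finset.sum_add_distrib]
  refine Finset.sum_congr rfl fun k _ => ?_
  split_ifs <;> simp

lemma perm_diag {ι : Type*} [Fintype ι] [DecidableEq ι] (g : ι → ι → ℂ) (i : ι) :
    (Fintype.card ι : ℂ) * ∑ π : Equiv.Perm ι, g (π i) (π i)
      = (Fintype.card (Equiv.Perm ι) : ℂ) * ∑ a, g a a := by
  have h1 : ∀ k, ∑ π : Equiv.Perm ι, g (π k) (π k) = ∑ π : Equiv.Perm ι, g (π i) (π i) := by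
    intro k
    rw [← perm_transfer g (Equiv.swap i k) i i, Equiv.swap_apply_left]
  have h2 : ∑ k, ∑ π : Equiv.Perm ι, g (π k) (π k) = (Fintype.card ι : ℂ) * ∑ π : Equiv.Perm ι, g (π i) (π i) := by
    rw [Finset.sum_congr rfl fun k _ => h1 k]; simp
  rw [← h2, Finset.sum_comm]
  have h3 : ∀ π : Equiv.Perm ι, ∑ k, g (π k) (π k) = ∑ a, g a a := fun π =>
    Equiv.sum_comp π (fun a => g a a)
  simp [h3]

lemma perm_off {ι : Type*} [Fintype ι] [DecidableEq ι] (g : ι → ι → ℂ) (i k : ι) (hik : i ≠ k) :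
    (Fintype.card ι : ℂ) * (Fintype.card ι - 1) * ∑ π : Equiv.Perm ι, g (π i) (π k)
      = (Fintype.card (Equiv.Perm ι) : ℂ) * (∑ a, ∑ b, g a b - ∑ a, g a a) := by
  have h1 : ∀ a b, a ≠ b → ∑ π : Equiv.Perm ι, g (π a) (π b) = ∑ π : Equiv.Perm ι, g (π i) (π k) := by
    intro a b hab
    obtain ⟨τ, rfl, rfl⟩ := exists_perm hik hab
    exact perm_transfer g τ i k
  have h2 : ∑ a, ∑ b, (if a = b then 0 else ∑ π : Equiv.Perm ι, g (π a) (π b))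
      = (Fintype.card ι : ℂ) * (Fintype.card ι - 1) * ∑ π : Equiv.Perm ι, g (π i) (π k) := by
    have : ∀ a b : ι, (if a = b then 0 else ∑ π : Equiv.Perm ι, g (π a) (π b))
        = if a = b then 0 else ∑ π : Equiv.Perm ι, g (π i) (π k) := by
      intro a b
      split_ifs with h
      · rfl
      · exact h1 a b h
    simp only [this]
    rw [sum_offdiag (fun _ _ => ∑ π : Equiv.Perm ι, g (π i) (π k))]
    simp
    ring
  rw [← h2]
  have h3 : ∀ a b : ι, (if a = b then 0 else ∑ π : Equiv.Perm ι, g (π a) (π b))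
      = ∑ π : Equiv.Perm ι, (if π a = π b then 0 else g (π a) (π b)) := by
    intro a b
    by_cases h : a = b <;> simp [h]
  simp only [h3]
  have h4 : ∑ a, ∑ b, ∑ π : Equiv.Perm ι, (if π a = π b then 0 else g (π a) (π b))
      = ∑ π : Equiv.Perm ι, ∑ a, ∑ b, (if π a = π b then 0 else g (π a) (π b)) := by
    rw [Finset.sum_comm]
    rw [Finset.sum_congr rfl fun a _ => Finset.sum_comm]
    rw [Finset.sum_comm]
    refine Finset.sum_congr rfl fun π _ => Finset.sum_comm
  have h5 : ∀ π : Equiv.Perm ι, ∑ a, ∑ b, (if π a = π b then 0 else g (π a) (π b))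
      = ∑ a, ∑ b, g a b - ∑ a, g a a := by
    intro π
    rw [← sum_offdiag, ← Equiv.sum_comp π (fun a => ∑ b, if a = b then 0 else g a b)]
    refine Finset.sum_congr rfl fun a _ => ?_
    rw [← Equiv.sum_comp π (fun b => if π a = b then 0 else g (π a) b)]
  rw [h4]
  simp only [h5]
  simp
  ring

lemma perm_avg {ι : Type*} [Fintype ι] [DecidableEq ι] (g u : ι → ι → ℂ) :
    (Fintype.card ι : ℂ) * (Fintype.card ι - 1) *
      ∑ π : Equiv.Perm ι, ∑ i, ∑ k, g (π i) (π k) * u i k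
      = (Fintype.card (Equiv.Perm ι) : ℂ) *
        ((∑ a, ∑ b, g a b - ∑ a, g a a) * (∑ a, ∑ b, u a b - ∑ a, u a a)
          + (Fintype.card ι - 1) * (∑ a, g a a) * (∑ a, u a a)) := by
  have h1 : ∑ π : Equiv.Perm ι, ∑ i, ∑ k, g (π i) (π k) * u i k
      = ∑ i, ∑ k, (∑ π : Equiv.Perm ι, g (π i) (π k)) * u i k := by
    simp only [Finset.sum_mul]
    rw [Finset.sum_comm]
    refine Finset.sum_congr rfl fun a _ => Finset.sum_comm
  have h2 : ∀ i k, (Fintype.card ι : ℂ) * (Fintype.card ι - 1) * ((∑ π : Equiv.Perm ι, g (π i) (π k)) * u i k)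
      = (Fintype.card (Equiv.Perm ι) : ℂ) * ((∑ a, ∑ b, g a b - ∑ a, g a a) * (if i = k then 0 else u i k)
        + (Fintype.card ι - 1) * (∑ a, g a a) * (if i = k then u i k else 0)) := by
    intro i k
    split_ifs with h
    · subst h
      linear_combination (Fintype.card ι - 1 : ℂ) * u i i * perm_diag g i
    · linear_combination u i k * perm_off g i k h
  rw [h1, Finset.mul_sum]
  simp only [Finset.mul_sum (a := (Fintype.card ι : ℂ) * (Fintype.card ι - 1)), h2]
  simp only [← Finset.mul_sum, Finset.sum_add_distrib]
  rw [sum_offdiag]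
  simp

lemma perm_avg_diag {ι : Type*} [Fintype ι] [DecidableEq ι] (g u : ι → ℂ) :
    (Fintype.card ι : ℂ) * ∑ π : Equiv.Perm ι, ∑ i, g (π i) * u i
      = (Fintype.card (Equiv.Perm ι) : ℂ) * ((∑ a, g a) * (∑ a, u a)) := by
  rw [Finset.sum_comm, Finset.mul_sum, Finset.mul_sum, Finset.mul_sum]
  refine Finset.sum_congr rfl fun i _ => ?_
  have := perm_diag (fun a _ => g a) i
  rw [← Finset.sum_mul, ← mul_assoc, this, mul_assoc]

lemma exists_flat {ι : Type*} [Fintype ι] [DecidableEq ι] [Nonempty ι] :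
    ∃ H : Matrix ι ι ℂ, Hᴴ * H = 1 ∧ ∀ i j, star (H i j) * H i j = (Fintype.card ι : ℂ)⁻¹ := by
  have hd : Fintype.card ι ≠ 0 := Fintype.card_ne_zero
  have : NeZero (Fintype.card ι) := ⟨hd⟩
  have e : ι ≃ ZMod (Fintype.card ι) := Fintype.equivOfCardEq (ZMod.card _).symm
  set s : ℂ := ((Real.sqrt (Fintype.card ι) : ℝ) : ℂ)⁻¹ with hs
  have hss : star s * s = (Fintype.card ι : ℂ)⁻¹ := by
    rw [hs, star_inv₀, ← mul_inv]
    congr 1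
    rw [Complex.star_def, Complex.conj_ofReal, ← Complex.ofReal_mul, Real.mul_self_sqrt (by positivity)]
    simp
  have key : ∀ i j k l : ι, star (s * ZMod.stdAddChar (e i * e j)) * (s * ZMod.stdAddChar (e k * e l))
      = (Fintype.card ι : ℂ)⁻¹ * ZMod.stdAddChar (e k * e l - e i * e j) := by
    intro i j k l
    rw [← hss, sub_eq_neg_add, AddChar.map_add_eq_mul, AddChar.map_neg_eq_conj, star_mul']
    simp only [Complex.star_def]
    ring
  refine ⟨Matrix.of fun i j => s * ZMod.stdAddChar (e i * e j), ?_, ?_⟩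
  · ext i j
    simp only [Matrix.mul_apply, Matrix.conjTranspose_apply, Matrix.of_apply, key]
    rw [← Finset.mul_sum]
    have h1 : ∀ x, e x * e j - e x * e i = e x * (e j - e i) := fun x => by ring
    simp only [h1]
    rw [Equiv.sum_comp e (fun x => ZMod.stdAddChar (x * (e j - e i))),
      AddChar.sum_mulShift _ (ZMod.isPrimitive_stdAddChar _)]
    by_cases hij : i = j
    · subst hij; simp
    · have : e j - e i ≠ 0 := by rw [sub_ne_zero]; exact fun h => hij (e.injective h).symm
      simp [this, hij]
  · intro i j
    simp only [Matrix.of_apply, key]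
    simp

end FQSW

namespace FQSW

section decoup
variable {α β : Type} [Fintype α] [DecidableEq α] [Fintype β] [DecidableEq β]

/-- the coefficient tensor of the purity of the `β`-marginal -/
noncomputable def cc {ι : Type} (U : Matrix (α × β) ι ℂ) (i j k l : ι) : ℂ :=
  ∑ m : β, ∑ m' : β, ∑ a : α, ∑ a' : α,
    U (a, m) i * star (U (a, m') j) * U (a', m') k * star (U (a', m) l)

lemma unit_rows (U : Matrix (α × β) (α × β) ℂ) (hU : Uᴴ * U = 1) (x y : α × β) :
    ∑ i, U x i * star (U y i) = if x = y then 1 else 0 := by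
  have h : U * Uᴴ = 1 := mul_eq_one_comm.1 hU
  have := congrFun (congrFun h x) y
  simpa [Matrix.mul_apply, Matrix.one_apply] using this

lemma cc_iikk {ι : Type} (U : Matrix (α × β) ι ℂ) (i k : ι) :
    cc U i i k k = ∑ m : β, ∑ m' : β, ∑ a : α, ∑ a' : α,
      (U (a, m) i * star (U (a, m') i)) * (U (a', m') k * star (U (a', m) k)) := by
  unfold cc
  simp only [mul_assoc]

lemma cc_F1 (U : Matrix (α × β) (α × β) ℂ) (hU : Uᴴ * U = 1) :
    ∑ i, ∑ k, cc U i i k k = (Fintype.card α : ℂ) ^ 2 * Fintype.card β := by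
  have h1 : ∑ i, ∑ k, cc U i i k k = ∑ m : β, ∑ m' : β, ∑ a : α, ∑ a' : α,
      (∑ i, U (a, m) i * star (U (a, m') i)) * (∑ k, U (a', m') k * star (U (a', m) k)) := by
    simp only [cc_iikk, Finset.sum_mul_sum]
    simp only [Finset.sum_comm (s := (Finset.univ : Finset (α × β))) (t := (Finset.univ : Finset α)),
      Finset.sum_comm (s := (Finset.univ : Finset (α × β))) (t := (Finset.univ : Finset β))]
  rw [h1]
  simp only [unit_rows U hU]
  simp
  ring

lemma cc_F2 (U : Matrix (α × β) (α × β) ℂ) (hU : Uᴴ * U = 1) :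
    ∑ i, ∑ k, cc U i k k i = (Fintype.card α : ℂ) * (Fintype.card β : ℂ) ^ 2 := by
  have h1 : ∑ i, ∑ k, cc U i k k i = ∑ m : β, ∑ m' : β, ∑ a : α, ∑ a' : α,
      (∑ i, U (a, m) i * star (U (a', m) i)) * (∑ k, U (a', m') k * star (U (a, m') k)) := by
    have h0 : ∀ i k, cc U i k k i = ∑ m : β, ∑ m' : β, ∑ a : α, ∑ a' : α,
      (U (a, m) i * star (U (a', m) i)) * (U (a', m') k * star (U (a, m') k)) := by
      intro i k
      unfold cc
      refine Finset.sum_congr rfl fun _ _ => Finset.sum_congr rfl fun _ _ =>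
        Finset.sum_congr rfl fun _ _ => Finset.sum_congr rfl fun _ _ => ?_
      ring
    simp only [h0, Finset.sum_mul_sum]
    simp only [Finset.sum_comm (s := (Finset.univ : Finset (α × β))) (t := (Finset.univ : Finset α)),
      Finset.sum_comm (s := (Finset.univ : Finset (α × β))) (t := (Finset.univ : Finset β))]
  rw [h1]
  simp only [unit_rows U hU]
  simp
  ring

lemma cc_diag {ι : Type} (U : Matrix (α × β) ι ℂ) (i : ι) :
    cc U i i i i = ((∑ m : β, ∑ m' : β, ‖∑ a : α, U (a, m) i * star (U (a, m') i)‖ ^ 2 : ℝ) : ℂ) := by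
  rw [cc_iikk]
  push_cast
  refine Finset.sum_congr rfl fun m _ => Finset.sum_congr rfl fun m' _ => ?_
  rw [← Finset.sum_mul_sum, ← Complex.mul_conj']
  congr 1
  rw [map_sum]
  refine Finset.sum_congr rfl fun a _ => ?_
  simp [mul_comm]

lemma cc_diag_lower (U : Matrix (α × β) (α × β) ℂ) (hU : Uᴴ * U = 1) (i : α × β) :
    1 ≤ Fintype.card β * (cc U i i i i).re := by
  rw [cc_diag, Complex.ofReal_re]
  have h1 : ∑ m : β, ‖∑ a : α, U (a, m) i * star (U (a, m) i)‖ ^ 2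
      ≤ ∑ m : β, ∑ m' : β, ‖∑ a : α, U (a, m) i * star (U (a, m') i)‖ ^ 2 := by
    gcongr with m
    exact Finset.single_le_sum (f := fun m' => ‖∑ a : α, U (a, m) i * star (U (a, m') i)‖ ^ 2)
      (fun _ _ => by positivity) (Finset.mem_univ m)
  have h2 : (∑ m : β, ‖∑ a : α, U (a, m) i * star (U (a, m) i)‖) ^ 2
      ≤ Fintype.card β * ∑ m : β, ‖∑ a : α, U (a, m) i * star (U (a, m) i)‖ ^ 2 :=
    sq_sum_le_card_mul_sum_sq
  have h3 : 1 ≤ ∑ m : β, ‖∑ a : α, U (a, m) i * star (U (a, m) i)‖ := by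
    have : ∑ m : β, ∑ a : α, U (a, m) i * star (U (a, m) i) = 1 := by
      have := congrFun (congrFun hU i) i
      rw [Matrix.mul_apply, Fintype.sum_prod_type, Finset.sum_comm] at this
      simpa [mul_comm] using this
    calc (1 : ℝ) = ‖∑ m : β, ∑ a : α, U (a, m) i * star (U (a, m) i)‖ := by rw [this]; simp
      _ ≤ _ := norm_sum_le _ _
  calc (1 : ℝ) ≤ (∑ m : β, ‖∑ a : α, U (a, m) i * star (U (a, m) i)‖) ^ 2 := by nlinarith
    _ ≤ _ := h2
    _ ≤ _ := by gcongr

/-- a unitary all of whose columns have, on average, small marginal purity -/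
lemma exists_U0 [Nonempty α] [Nonempty β] :
    ∃ U : Matrix (α × β) (α × β) ℂ, Uᴴ * U = 1 ∧
      ∑ i, (cc U i i i i).re ≤ Fintype.card α + Fintype.card β := by
  obtain ⟨H, hH, hflat⟩ := exists_flat (ι := α × β)
  let V : (α × β → ZMod 3) → Matrix (α × β) (α × β) ℂ := fun θ => Matrix.of fun x i => ph (θ x) * H x i
  have hV : ∀ θ, (V θ)ᴴ * V θ = 1 := by
    intro θ
    rw [← hH]
    ext i j
    simp only [Matrix.mul_apply, Matrix.conjTranspose_apply, V, Matrix.of_apply, star_mul']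
    refine Finset.sum_congr rfl fun x _ => ?_
    linear_combination (star (H x i) * H x j) * ph_mul_star (θ x)
  have hd : (Fintype.card (α × β) : ℝ) = Fintype.card α * Fintype.card β := by
    rw [Fintype.card_prod]; push_cast; rfl
  have ha : (0 : ℝ) < Fintype.card α := by exact_mod_cast Fintype.card_pos
  have hb : (0 : ℝ) < Fintype.card β := by exact_mod_cast Fintype.card_pos
  have havg : ∀ i, (∑ θ, cc (V θ) i i i i).re ≤
      (3 : ℝ) ^ Fintype.card (α × β) * ((Fintype.card α : ℝ)⁻¹ + (Fintype.card β : ℝ)⁻¹) := by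
    intro i
    have h1 : ∑ θ, cc (V θ) i i i i = ∑ m : β, ∑ m' : β, ∑ a : α, ∑ a' : α,
        (∑ θ : α × β → ZMod 3, ph (θ (a, m) - θ (a, m') + θ (a', m') - θ (a', m))) *
        (H (a, m) i * star (H (a, m') i) * H (a', m') i * star (H (a', m) i)) := by
      unfold cc
      simp only [Finset.sum_mul]
      rw [Finset.sum_comm]; refine Finset.sum_congr rfl fun m _ => ?_
      rw [Finset.sum_comm]; refine Finset.sum_congr rfl fun m' _ => ?_
      rw [Finset.sum_comm]; refine Finset.sum_congr rfl fun a _ => ?_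
      rw [Finset.sum_comm]; refine Finset.sum_congr rfl fun a' _ => ?_
      refine Finset.sum_congr rfl fun θ _ => ?_
      simp only [V, Matrix.of_apply, star_mul', ← ph_four]
      ring
    have hn : ∀ x, ‖H x i‖ ^ 2 = ((Fintype.card α : ℝ) * Fintype.card β)⁻¹ := by
      intro x
      have := hflat x i
      rw [Complex.star_def, Complex.conj_mul'] at this
      rw [← hd]
      apply Complex.ofReal_injective
      push_cast
      exact this
    have hn4 : ∀ x y z w, ‖H x i * star (H y i) * H z i * star (H w i)‖
        = (((Fintype.card α : ℝ) * Fintype.card β)⁻¹) ^ 2 := by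
      intro x y z w
      have hx : ∀ x, ‖H x i‖ = Real.sqrt (((Fintype.card α : ℝ) * Fintype.card β)⁻¹) := by
        intro x
        rw [← hn x, Real.sqrt_sq (norm_nonneg _)]
      simp only [norm_mul, norm_star, hx]
      have := Real.mul_self_sqrt (show 0 ≤ ((Fintype.card α : ℝ) * Fintype.card β)⁻¹ by positivity)
      rw [this, mul_assoc, this, sq]
    have hterm : ∀ m m' a a', ‖(∑ θ : α × β → ZMod 3, ph (θ (a, m) - θ (a, m') + θ (a', m') - θ (a', m))) *
        (H (a, m) i * star (H (a, m') i) * H (a', m') i * star (H (a', m) i))‖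
        ≤ (3 : ℝ) ^ Fintype.card (α × β) * (((Fintype.card α : ℝ) * Fintype.card β)⁻¹) ^ 2 *
          ((if m = m' then 1 else 0) + (if a = a' then 1 else 0)) := by
      intro m m' a a'
      rw [norm_mul, hn4, phase_sum]
      have : ‖(if ((a, m) = (a, m') ∧ (a', m') = (a', m)) ∨ ((a, m) = (a', m) ∧ (a, m') = (a', m'))
          then (3 : ℂ) ^ Fintype.card (α × β) else 0)‖ ≤ (3 : ℝ) ^ Fintype.card (α × β) *
          ((if m = m' then 1 else 0) + (if a = a' then 1 else 0)) := by
        have h3 : (0:ℝ) < (3 : ℝ) ^ Fintype.card (α × β) := by positivity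
        by_cases h : m = m'
        · subst h
          by_cases h' : a = a' <;> simp [h']
        · by_cases h' : a = a' <;> simp [h, h', Ne.symm h]
      calc _ ≤ ((3 : ℝ) ^ Fintype.card (α × β) *
          ((if m = m' then 1 else 0) + (if a = a' then 1 else 0))) * (((Fintype.card α : ℝ) * Fintype.card β)⁻¹) ^ 2 := by
            gcongr
        _ = _ := by ring
    refine (Complex.re_le_norm _).trans ?_
    rw [h1]
    calc _ ≤ ∑ m : β, ∑ m' : β, ∑ a : α, ∑ a' : α, (3 : ℝ) ^ Fintype.card (α × β) *
          (((Fintype.card α : ℝ) * Fintype.card β)⁻¹) ^ 2 *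
          ((if m = m' then 1 else 0) + (if a = a' then 1 else 0)) := by
          refine (norm_sum_le _ _).trans (Finset.sum_le_sum fun m _ => ?_)
          refine (norm_sum_le _ _).trans (Finset.sum_le_sum fun m' _ => ?_)
          refine (norm_sum_le _ _).trans (Finset.sum_le_sum fun a _ => ?_)
          refine (norm_sum_le _ _).trans (Finset.sum_le_sum fun a' _ => ?_)
          exact hterm m m' a a'
      _ = _ := by
          simp only [← Finset.mul_sum, Finset.sum_add_distrib]
          simp
          field_simp
          ring
  have hex : ∃ θ ∈ (Finset.univ : Finset (α × β → ZMod 3)), ∑ i, (cc (V θ) i i i i).re ≤ (Fintype.card α + Fintype.card β : ℝ) := by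
    apply Finset.exists_le_of_sum_le Finset.univ_nonempty
    rw [Finset.sum_comm]
    calc _ ≤ ∑ i : α × β, (3 : ℝ) ^ Fintype.card (α × β) * ((Fintype.card α : ℝ)⁻¹ + (Fintype.card β : ℝ)⁻¹) := by
          gcongr with i
          have := havg i
          rwa [Complex.re_sum] at this
      _ = _ := by
          simp only [Finset.sum_const, Finset.card_univ, nsmul_eq_mul, hd]
          rw [Fintype.card_fun, ZMod.card]
          push_cast
          field_simp
          ring
  obtain ⟨θ, _, h⟩ := hex
  exact ⟨V θ, hV θ, h⟩

/-- the averaging argument -/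
lemma exists_good_unitary [Nonempty α] [Nonempty β] (h2 : 2 ≤ Fintype.card (α × β))
    (t : α × β → α × β → α × β → α × β → ℂ)
    (PR PAR S : ℝ) (hPR : (∑ i, ∑ k, t i i k k).re = PR) (hPAR : (∑ i, ∑ k, t i k k i).re = PAR)
    (hS : (∑ i, t i i i i).re = S) (hPR0 : 0 ≤ PR) (hS0 : 0 ≤ S) (hSP : S ≤ PAR) :
    ∃ U : Matrix (α × β) (α × β) ℂ, Uᴴ * U = 1 ∧
      (∑ i, ∑ j, ∑ k, ∑ l, cc U i j k l * t i j k l).re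
        ≤ PR / Fintype.card β + 2 * PAR / Fintype.card α := by
  obtain ⟨U, hU, hp⟩ := exists_U0 (α := α) (β := β)
  let V : Equiv.Perm (α × β) → (α × β → ZMod 3) → Matrix (α × β) (α × β) ℂ :=
    fun π θ => Matrix.of fun x i => U x (π i) * ph (θ i)
  have hV : ∀ π θ, (V π θ)ᴴ * V π θ = 1 := by
    intro π θ
    ext i j
    have h := congrFun (congrFun hU (π i)) (π j)
    simp only [Matrix.mul_apply, Matrix.conjTranspose_apply, Matrix.one_apply] at h
    have h' : ∑ x, star (U x (π i) * ph (θ i)) * (U x (π j) * ph (θ j))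
        = star (ph (θ i)) * ph (θ j) * ∑ x, star (U x (π i)) * U x (π j) := by
      rw [Finset.mul_sum]
      refine Finset.sum_congr rfl fun x _ => ?_
      rw [star_mul']; ring
    simp only [Matrix.mul_apply, Matrix.conjTranspose_apply, V, Matrix.of_apply, Matrix.one_apply]
    rw [h', h]
    by_cases hij : i = j
    · subst hij; simp only [if_true, mul_one, ph_mul_star]
    · simp [hij]
  have hcc : ∀ π θ i j k l, cc (V π θ) i j k l
      = ph (θ i - θ j + θ k - θ l) * cc U (π i) (π j) (π k) (π l) := by
    intro π θ i j k l
    unfold cc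
    simp only [Finset.mul_sum, ← ph_four]
    refine Finset.sum_congr rfl fun _ _ => Finset.sum_congr rfl fun _ _ =>
        Finset.sum_congr rfl fun _ _ => Finset.sum_congr rfl fun _ _ => ?_
    simp only [V, Matrix.of_apply, star_mul']
    ring
  set f : Equiv.Perm (α × β) → (α × β → ZMod 3) → ℂ :=
    fun π θ => ∑ i, ∑ j, ∑ k, ∑ l, cc (V π θ) i j k l * t i j k l with hf
  set d : ℝ := (Fintype.card (α × β) : ℝ) with hdd
  set p : ℝ := ∑ i, (cc U i i i i).re with hpdef
  set N : ℝ := (3 : ℝ) ^ Fintype.card (α × β) * Fintype.card (Equiv.Perm (α × β)) with hN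
  have hpc : ∑ i, cc U i i i i = (p : ℂ) := by
    rw [hpdef, Complex.ofReal_sum]
    refine Finset.sum_congr rfl fun i _ => ?_
    rw [cc_diag, Complex.ofReal_re]
  have hsum : (d : ℂ) * (d - 1) * ∑ π, ∑ θ, f π θ = N *
      (((Fintype.card α : ℝ) ^ 2 * Fintype.card β - p : ℝ) * (∑ i, ∑ k, t i i k k - ∑ i, t i i i i)
       + ((Fintype.card α : ℝ) * (Fintype.card β : ℝ) ^ 2 - p : ℝ) * (∑ i, ∑ k, t i k k i - ∑ i, t i i i i)
       + ((d - 1) * p : ℝ) * ∑ i, t i i i i) := by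
    have e1 : ∀ π, ∑ θ, f π θ = (3 : ℂ) ^ Fintype.card (α × β) *
        (∑ i, ∑ k, cc U (π i) (π i) (π k) (π k) * t i i k k
          + ∑ i, ∑ k, cc U (π i) (π k) (π k) (π i) * t i k k i
          - ∑ i, cc U (π i) (π i) (π i) (π i) * t i i i i) := by
      intro π
      rw [← phase_avg (fun i j k l => cc U (π i) (π j) (π k) (π l) * t i j k l)]
      simp only [hf, hcc, mul_assoc]
    simp only [e1, ← Finset.mul_sum, Finset.sum_add_distrib, Finset.sum_sub_distrib]
    have a1 := perm_avg (fun i k => cc U i i k k) (fun i k => t i i k k)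
    have a2 := perm_avg (fun i k => cc U i k k i) (fun i k => t i k k i)
    have a3 := perm_avg_diag (fun i => cc U i i i i) (fun i => t i i i i)
    simp only [cc_F1 U hU, cc_F2 U hU, hpc] at a1 a2 a3
    have hd' : (d : ℂ) = (Fintype.card (α × β) : ℂ) := by rw [hdd]; simp
    rw [hd', hN]
    push_cast
    rw [hd']
    linear_combination (3 : ℂ) ^ Fintype.card (α × β) * (a1 + a2 - (Fintype.card (α × β) - 1 : ℂ) * a3)
  have hsumre : d * (d - 1) * ∑ π, ∑ θ, (f π θ).re = N *
      (((Fintype.card α : ℝ) ^ 2 * Fintype.card β - p) * (PR - S)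
       + ((Fintype.card α : ℝ) * (Fintype.card β : ℝ) ^ 2 - p) * (PAR - S)
       + ((d - 1) * p) * S) := by
    have := congrArg Complex.re hsum
    have e : (d : ℂ) * (d - 1) = ((d * (d - 1) : ℝ) : ℂ) := by push_cast; rfl
    rw [e] at this
    simp only [Complex.re_ofReal_mul, Complex.add_re, Complex.sub_re, hPR, hPAR, hS, Complex.re_sum] at this ⊢
    exact this
  have ha : (1 : ℝ) ≤ Fintype.card α := by exact_mod_cast Fintype.card_pos
  have hb : (1 : ℝ) ≤ Fintype.card β := by exact_mod_cast Fintype.card_pos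
  have hdab : d = Fintype.card α * Fintype.card β := by rw [hdd, Fintype.card_prod]; push_cast; rfl
  have hd2 : 2 ≤ d := by rw [hdd]; exact_mod_cast h2
  have hplow : (Fintype.card α : ℝ) ≤ p := by
    have : d ≤ Fintype.card β * p := by
      rw [hpdef, Finset.mul_sum]
      calc d = ∑ i : α × β, (1 : ℝ) := by simp [hdd]
        _ ≤ _ := Finset.sum_le_sum fun i _ => cc_diag_lower U hU i
    rw [hdab, mul_comm] at this
    exact le_of_mul_le_mul_left this (by linarith)
  have hNpos : 0 < N := by rw [hN]; positivity
  generalize (Fintype.card α : ℝ) = a at *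
  generalize (Fintype.card β : ℝ) = b at *
  have hbound : (a ^ 2 * b - p) * (PR - S) + (a * b ^ 2 - p) * (PAR - S) + ((d - 1) * p) * S
      ≤ d * (d - 1) * (PR / b + 2 * PAR / a) := by
    have e : d * (d - 1) * (PR / b + 2 * PAR / a) = a * (d - 1) * PR + 2 * b * (d - 1) * PAR := by
      rw [hdab]; field_simp
    rw [e]
    set q := p - a with hq
    have hp' : p = a + q := by ring
    have q0 : 0 ≤ q := by linarith
    have q1 : q ≤ b := by linarith
    rw [hp', hdab]
    rw [hdab] at hd2
    have hT : 0 ≤ PAR - S := by linarith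
    -- PAR = T + S
    obtain ⟨T, hTd⟩ : ∃ T, T = PAR - S := ⟨_, rfl⟩
    rw [← hTd] at hT ⊢
    have hPT : PAR = T + S := by linarith
    rw [hPT]
    have c1 : q * S ≤ b * S := by gcongr
    have c2 : q * (a * b) * S ≤ b * (a * b) * S := by gcongr
    have c3 : 0 ≤ q * PR := by positivity
    have c4 : 0 ≤ q * T := by positivity
    have c5 : 0 ≤ b * T := by positivity
    have c6 : 0 ≤ b * S := by positivity
    have c7 : 0 ≤ a * T := by positivity
    have c7' : 0 ≤ a * S := by positivity
    have c8 : 0 ≤ b * T * (a * b - 2) := mul_nonneg c5 (by linarith)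
    have c9 : 0 ≤ b * S * (a * b - 2) := mul_nonneg c6 (by linarith)
    have c10 : 0 ≤ q * S := by positivity
    have c11 : 0 ≤ S * (b - q) * (a * b) := by
      have : 0 ≤ b - q := by linarith
      positivity
    nlinarith
  have hex : ∃ x ∈ (Finset.univ : Finset (Equiv.Perm (α × β) × (α × β → ZMod 3))), (f x.1 x.2).re ≤ PR / b + 2 * PAR / a := by
    apply Finset.exists_le_of_sum_le Finset.univ_nonempty
    rw [Fintype.sum_prod_type]
    have e : ∑ _x : Equiv.Perm (α × β) × (α × β → ZMod 3), (PR / b + 2 * PAR / a) = N * (PR / b + 2 * PAR / a) := by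
      simp only [Finset.sum_const, Finset.card_univ, nsmul_eq_mul]
      rw [Fintype.card_prod, Fintype.card_fun, ZMod.card, hN]
      push_cast
      ring
    rw [e]
    have hdd' : 0 < d * (d - 1) := mul_pos (by linarith) (by linarith)
    refine le_of_mul_le_mul_left ?_ hdd'
    calc _ = _ := hsumre
      _ ≤ N * (d * (d - 1) * (PR / b + 2 * PAR / a)) := by gcongr
      _ = _ := by ring
  obtain ⟨x, _, hx⟩ := hex
  exact ⟨V x.1 x.2, hV _ _, hx⟩

end decoup

end FQSW

namespace FQSW

section protocol
variable {R A₁ A₂ B : Type} [Fintype R] [DecidableEq R] [Fintype A₁] [DecidableEq A₁]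
  [Fintype A₂] [DecidableEq A₂] [Fintype B] [DecidableEq B]

lemma purity_herm {ι : Type*} [Fintype ι] (M : Matrix ι ι ℂ) (h : Mᴴ = M) :
    purity M = ∑ i, ∑ j, ‖M i j‖ ^ 2 := by
  have : purity M = hs M := by unfold purity hs; rw [h]
  rw [this, hs_eq_sum, Finset.sum_comm]

lemma purity_nonneg {ι : Type*} [Fintype ι] (M : Matrix ι ι ℂ) (h : Mᴴ = M) :
    0 ≤ purity M := by
  rw [purity_herm M h]; positivity

lemma redAR_herm {A : Type} (ψ : R × (A × B) → ℂ) : (redAR ψ)ᴴ = redAR ψ := by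
  ext i j
  simp only [Matrix.conjTranspose_apply, redAR, Matrix.of_apply, star_sum, star_mul', star_star]
  exact Finset.sum_congr rfl fun _ _ => mul_comm _ _

lemma redA_herm {A : Type} (ψ : R × (A × B) → ℂ) : (redA ψ)ᴴ = redA ψ := by
  ext i j
  simp only [Matrix.conjTranspose_apply, redA, Matrix.of_apply, star_sum, star_mul', star_star]
  exact Finset.sum_congr rfl fun _ _ => Finset.sum_congr rfl fun _ _ => mul_comm _ _

lemma redR_herm {A : Type} [Fintype A] (ψ : R × (A × B) → ℂ) : (redR ψ)ᴴ = redR ψ := by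
  ext i j
  simp only [Matrix.conjTranspose_apply, redR, Matrix.of_apply, star_sum, star_mul', star_star]
  exact Finset.sum_congr rfl fun _ _ => mul_comm _ _

lemma redR_eq {A : Type} [Fintype A] (ψ : R × (A × B) → ℂ) (r s : R) :
    redR ψ r s = ∑ i, redAR ψ (i, r) (i, s) := by
  simp only [redR, redAR, Matrix.of_apply, Fintype.sum_prod_type]

/-- the tensor contracted with `cc` -/
noncomputable def tt {A : Type} (ψ : R × (A × B) → ℂ) (i j k l : A) : ℂ :=
  ∑ r, ∑ s, redAR ψ (i, r) (j, s) * redAR ψ (k, s) (l, r)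

lemma tt_PR {A : Type} [Fintype A] (ψ : R × (A × B) → ℂ) :
    (∑ i, ∑ k, tt ψ i i k k).re = purity (redR ψ) := by
  unfold purity
  congr 1
  simp only [Matrix.trace, Matrix.diag, Matrix.mul_apply, redR_eq, Finset.sum_mul_sum, tt]
  calc _ = ∑ x : A × A, ∑ y : R × R, redAR ψ (x.1, y.1) (x.1, y.2) * redAR ψ (x.2, y.2) (x.2, y.1) := by
        simp only [Fintype.sum_prod_type]
    _ = ∑ y : R × R, ∑ x : A × A, redAR ψ (x.1, y.1) (x.1, y.2) * redAR ψ (x.2, y.2) (x.2, y.1) :=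
        Finset.sum_comm
    _ = _ := by simp only [Fintype.sum_prod_type]

lemma tt_PAR {A : Type} [Fintype A] (ψ : R × (A × B) → ℂ) :
    (∑ i, ∑ k, tt ψ i k k i).re = purity (redAR ψ) := by
  unfold purity
  congr 1
  simp only [Matrix.trace, Matrix.diag, Matrix.mul_apply, tt, Fintype.sum_prod_type]
  refine Finset.sum_congr rfl fun i _ => ?_
  rw [Finset.sum_comm]

lemma tt_S {A : Type} [Fintype A] (ψ : R × (A × B) → ℂ) :
    (∑ i, tt ψ i i i i).re = ∑ i, ∑ r, ∑ s, ‖redAR ψ (i, r) (i, s)‖ ^ 2 := by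
  simp only [tt, Complex.re_sum]
  refine Finset.sum_congr rfl fun i _ => Finset.sum_congr rfl fun r _ =>
    Finset.sum_congr rfl fun s _ => ?_
  have h : redAR ψ (i, s) (i, r) = star (redAR ψ (i, r) (i, s)) := by
    conv_lhs => rw [← redAR_herm ψ]
    rfl
  rw [h, ← Complex.normSq_eq_norm_sq, Complex.star_def, Complex.mul_conj, Complex.ofReal_re]

lemma tt_S_le {A : Type} [Fintype A] (ψ : R × (A × B) → ℂ) :
    (∑ i, tt ψ i i i i).re ≤ purity (redAR ψ) := by
  rw [tt_S, purity_herm _ (redAR_herm ψ)]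
  simp only [Fintype.sum_prod_type]
  refine Finset.sum_le_sum fun i _ => Finset.sum_le_sum fun r _ => ?_
  exact Finset.single_le_sum (f := fun k => ∑ s, ‖redAR ψ (i, r) (k, s)‖ ^ 2)
    (fun k _ => by positivity) (Finset.mem_univ i)

/-- the state after `U`, as a matrix from `A₁B` to `A₂R` -/
noncomputable def M1 (U : Matrix (A₁ × A₂) (A₁ × A₂) ℂ) (ψ : R × ((A₁ × A₂) × B) → ℂ) :
    Matrix (A₂ × R) (A₁ × B) ℂ :=
  Matrix.of fun x y => ∑ i, U (y.1, x.1) i * ψ (x.2, (i, y.2))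

/-- the target state, as a matrix -/
noncomputable def M2 (ψ : R × ((A₁ × A₂) × B) → ℂ) :
    Matrix (A₂ × R) (((A₁ × A₂) × B) × A₂) ℂ :=
  Matrix.of fun x y => ψ (x.2, y.1) * maxEntVec A₂ (x.1, y.2)

lemma sigma_apply (U : Matrix (A₁ × A₂) (A₁ × A₂) ℂ) (ψ : R × ((A₁ × A₂) × B) → ℂ)
    (m m' : A₂) (r s : R) :
    (M1 U ψ * (M1 U ψ)ᴴ) (m, r) (m', s) = ∑ i, ∑ j,
      (∑ a, U (a, m) i * star (U (a, m') j)) * redAR ψ (i, r) (j, s) := by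
  simp only [Matrix.mul_apply, Matrix.conjTranspose_apply, M1, Matrix.of_apply, star_sum, star_mul',
    Finset.sum_mul_sum, redAR]
  calc _ = ∑ y : A₁ × B, ∑ x : (A₁ × A₂) × (A₁ × A₂), U (y.1, m) x.1 * ψ (r, (x.1, y.2)) *
        (star (U (y.1, m') x.2) * star (ψ (s, (x.2, y.2)))) := by
        simp only [Fintype.sum_prod_type]
    _ = _ := Finset.sum_comm
    _ = _ := by
        rw [Fintype.sum_prod_type]
        refine Finset.sum_congr rfl fun i _ => Finset.sum_congr rfl fun j _ => ?_
        rw [Fintype.sum_prod_type]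
        refine Finset.sum_congr rfl fun a _ => Finset.sum_congr rfl fun b _ => ?_
        ring

lemma sigma_sq (U : Matrix (A₁ × A₂) (A₁ × A₂) ℂ) (ψ : R × ((A₁ × A₂) × B) → ℂ) :
    ((M1 U ψ * (M1 U ψ)ᴴ) * (M1 U ψ * (M1 U ψ)ᴴ)).trace
      = ∑ i, ∑ j, ∑ k, ∑ l, cc U i j k l * tt ψ i j k l := by
  set G : A₂ → A₂ → (A₁ × A₂) → (A₁ × A₂) → ℂ :=
    fun m m' i j => ∑ a, U (a, m) i * star (U (a, m') j) with hG
  have hcc : ∀ i j k l, cc U i j k l = ∑ m, ∑ m', G m m' i j * G m' m k l := by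
    intro i j k l
    unfold cc
    refine Finset.sum_congr rfl fun m _ => Finset.sum_congr rfl fun m' _ => ?_
    rw [hG, Finset.sum_mul_sum]
    refine Finset.sum_congr rfl fun a _ => Finset.sum_congr rfl fun a' _ => ?_
    ring
  have hs' : ∀ m m' r s, (M1 U ψ * (M1 U ψ)ᴴ) (m, r) (m', s)
      = ∑ x : (A₁ × A₂) × (A₁ × A₂), G m m' x.1 x.2 * redAR ψ (x.1, r) (x.2, s) := by
    intro m m' r s
    rw [sigma_apply]
    exact (Fintype.sum_prod_type' (fun i j => G m m' i j * redAR ψ (i, r) (j, s))).symm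
  have lhs : ((M1 U ψ * (M1 U ψ)ᴴ) * (M1 U ψ * (M1 U ψ)ᴴ)).trace
      = ∑ x : (A₂ × R) × (A₂ × R), ∑ y : ((A₁ × A₂) × (A₁ × A₂)) × ((A₁ × A₂) × (A₁ × A₂)),
        (G x.1.1 x.2.1 y.1.1 y.1.2 * redAR ψ (y.1.1, x.1.2) (y.1.2, x.2.2)) *
        (G x.2.1 x.1.1 y.2.1 y.2.2 * redAR ψ (y.2.1, x.2.2) (y.2.2, x.1.2)) := by
    rw [Fintype.sum_prod_type]
    simp only [Matrix.trace, Matrix.diag]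
    refine Finset.sum_congr rfl fun x _ => ?_
    rw [Matrix.mul_apply]
    refine Finset.sum_congr rfl fun x' _ => ?_
    obtain ⟨m, r⟩ := x
    obtain ⟨m', s⟩ := x'
    rw [hs', hs', Finset.sum_mul_sum, ← Fintype.sum_prod_type']
  have rhs : ∑ i, ∑ j, ∑ k, ∑ l, cc U i j k l * tt ψ i j k l
      = ∑ y : ((A₁ × A₂) × (A₁ × A₂)) × ((A₁ × A₂) × (A₁ × A₂)),
          cc U y.1.1 y.1.2 y.2.1 y.2.2 * tt ψ y.1.1 y.1.2 y.2.1 y.2.2 := by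
    symm
    refine (Fintype.sum_prod_type _).trans ?_
    refine (Fintype.sum_prod_type _).trans ?_
    refine Finset.sum_congr rfl fun i _ => Finset.sum_congr rfl fun j _ => ?_
    exact Fintype.sum_prod_type _
  rw [lhs, rhs, Finset.sum_comm]
  refine Finset.sum_congr rfl fun y _ => ?_
  rw [hcc, tt]
  rw [← Fintype.sum_prod_type' (fun m m' => G m m' y.1.1 y.1.2 * G m' m y.2.1 y.2.2),
    ← Fintype.sum_prod_type' (fun r s => redAR ψ (y.1.1, r) (y.1.2, s) * redAR ψ (y.2.1, s) (y.2.2, r)),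
    Finset.sum_mul_sum, ← Fintype.sum_prod_type']
  refine Fintype.sum_equiv (Equiv.prodProdProdComm A₂ R A₂ R) _ _ fun x => ?_
  simp only [Equiv.prodProdProdComm_apply]
  ring

lemma sigma_marg (U : Matrix (A₁ × A₂) (A₁ × A₂) ℂ) (hU : Uᴴ * U = 1)
    (ψ : R × ((A₁ × A₂) × B) → ℂ) (r s : R) :
    ∑ m, (M1 U ψ * (M1 U ψ)ᴴ) (m, r) (m, s) = redR ψ r s := by
  have hU' : ∀ i j, ∑ m, ∑ a, U (a, m) i * star (U (a, m) j) = if i = j then 1 else 0 := by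
    intro i j
    have := congrFun (congrFun hU j) i
    simp only [Matrix.mul_apply, Matrix.conjTranspose_apply, Matrix.one_apply,
      Fintype.sum_prod_type] at this
    rw [Finset.sum_comm]
    simp only [eq_comm (a := i), ← this]
    exact Finset.sum_congr rfl fun _ _ => Finset.sum_congr rfl fun _ _ => mul_comm _ _
  simp only [sigma_apply]
  rw [Finset.sum_comm, redR_eq]
  refine Finset.sum_congr rfl fun i _ => ?_
  rw [Finset.sum_comm]
  simp only [← Finset.sum_mul, hU']
  simp

lemma maxEnt_sum (m m' : A₂) : ∑ b, maxEntVec A₂ (m, b) * star (maxEntVec A₂ (m', b))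
    = if m = m' then (Fintype.card A₂ : ℂ)⁻¹ else 0 := by
  simp only [maxEntVec]
  have h : ((Real.sqrt (Fintype.card A₂) : ℂ))⁻¹ * star ((Real.sqrt (Fintype.card A₂) : ℂ))⁻¹
      = (Fintype.card A₂ : ℂ)⁻¹ := by
    rw [Complex.star_def, map_inv₀, Complex.conj_ofReal, ← mul_inv, ← Complex.ofReal_mul,
      Real.mul_self_sqrt (by positivity)]
    simp
  by_cases hm : m = m'
  · subst hm
    rw [if_pos rfl, Finset.sum_eq_single m]
    · simpa using h
    · intro b _ hb; simp [Ne.symm hb]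
    · simp
  · rw [if_neg hm]
    refine Finset.sum_eq_zero fun b _ => ?_
    by_cases h1 : m = b
    · have : m' ≠ b := fun h => hm (h1.trans h.symm)
      simp [this]
    · simp [h1]

lemma tau_apply (ψ : R × ((A₁ × A₂) × B) → ℂ) (m m' : A₂) (r s : R) :
    (M2 ψ * (M2 ψ)ᴴ) (m, r) (m', s) = if m = m' then (Fintype.card A₂ : ℂ)⁻¹ * redR ψ r s else 0 := by
  simp only [Matrix.mul_apply, Matrix.conjTranspose_apply, M2, Matrix.of_apply, star_mul']
  rw [Fintype.sum_prod_type]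
  have : ∀ q : (A₁ × A₂) × B, ∑ b : A₂, ψ (r, q) * maxEntVec A₂ (m, b) * (star (ψ (s, q)) * star (maxEntVec A₂ (m', b)))
      = ψ (r, q) * star (ψ (s, q)) * (if m = m' then (Fintype.card A₂ : ℂ)⁻¹ else 0) := by
    intro q
    rw [← maxEnt_sum, Finset.mul_sum]
    exact Finset.sum_congr rfl fun b _ => by ring
  simp only [this, ← Finset.sum_mul, redR, Matrix.of_apply]
  split_ifs <;> ring

lemma mul_tau_trace (ψ : R × ((A₁ × A₂) × B) → ℂ) (S : Matrix (A₂ × R) (A₂ × R) ℂ)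
    (hS : ∀ r s, ∑ m, S (m, r) (m, s) = redR ψ r s) :
    (S * (M2 ψ * (M2 ψ)ᴴ)).trace = (Fintype.card A₂ : ℂ)⁻¹ * (redR ψ * redR ψ).trace := by
  simp only [Matrix.trace, Matrix.diag]
  have h : ∀ x : A₂ × R, (S * (M2 ψ * (M2 ψ)ᴴ)) x x
      = ∑ s, S x (x.1, s) * ((Fintype.card A₂ : ℂ)⁻¹ * redR ψ s x.2) := by
    rintro ⟨m, r⟩
    rw [Matrix.mul_apply, Fintype.sum_prod_type, Finset.sum_comm]
    refine Finset.sum_congr rfl fun s _ => ?_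
    simp only [tau_apply]
    rw [Finset.sum_eq_single m]
    · simp
    · intro b _ hb; simp [hb]
    · simp
  simp only [h]
  rw [Fintype.sum_prod_type, Finset.sum_comm, Finset.mul_sum]
  refine Finset.sum_congr rfl fun r _ => ?_
  rw [Finset.sum_comm, Matrix.mul_apply, Finset.mul_sum]
  refine Finset.sum_congr rfl fun s _ => ?_
  change ∑ x, S (x, r) (x, s) * ((Fintype.card A₂ : ℂ)⁻¹ * redR ψ s r) = _
  rw [← Finset.sum_mul, hS]
  ring

lemma tau_marg [Nonempty A₂] (ψ : R × ((A₁ × A₂) × B) → ℂ) (r s : R) :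
    ∑ m, (M2 ψ * (M2 ψ)ᴴ) (m, r) (m, s) = redR ψ r s := by
  simp only [tau_apply, if_true, Finset.sum_const, Finset.card_univ, nsmul_eq_mul]
  have : (Fintype.card A₂ : ℂ) ≠ 0 := by exact_mod_cast Fintype.card_ne_zero
  field_simp

lemma hs_of_marg {n : Type} [Fintype n] {A : Type} [Fintype A] (ψ : R × (A × B) → ℂ) (hψ : star ψ ⬝ᵥ ψ = 1)
    (M : Matrix (A₂ × R) n ℂ) (hM : ∀ r s, ∑ m, (M * Mᴴ) (m, r) (m, s) = redR ψ r s) : hs M = 1 := by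
  unfold hs
  rw [Matrix.trace_mul_comm]
  have : (M * Mᴴ).trace = 1 := by
    rw [← hψ]
    simp only [Matrix.trace, Matrix.diag, dotProduct]
    rw [Fintype.sum_prod_type, Finset.sum_comm, Fintype.sum_prod_type]
    refine Finset.sum_congr rfl fun r _ => ?_
    rw [hM, redR, Matrix.of_apply]
    exact Finset.sum_congr rfl fun q _ => by simp [mul_comm]
  rw [this]; simp

lemma diff_trace [Nonempty A₂] (U : Matrix (A₁ × A₂) (A₁ × A₂) ℂ) (hU : Uᴴ * U = 1)
    (ψ : R × ((A₁ × A₂) × B) → ℂ) :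
    ((M1 U ψ * (M1 U ψ)ᴴ - M2 ψ * (M2 ψ)ᴴ) * (M1 U ψ * (M1 U ψ)ᴴ - M2 ψ * (M2 ψ)ᴴ)).trace.re
      = (∑ i, ∑ j, ∑ k, ∑ l, cc U i j k l * tt ψ i j k l).re
        - purity (redR ψ) / Fintype.card A₂ := by
  have h1 := mul_tau_trace ψ (M1 U ψ * (M1 U ψ)ᴴ) (sigma_marg U hU ψ)
  have h2 := mul_tau_trace ψ (M2 ψ * (M2 ψ)ᴴ) (tau_marg ψ)
  have h3 := sigma_sq U ψ
  generalize M1 U ψ * (M1 U ψ)ᴴ = σ at *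
  generalize M2 ψ * (M2 ψ)ᴴ = τ at *
  have : ((σ - τ) * (σ - τ)).trace = (σ * σ).trace - 2 * (σ * τ).trace + (τ * τ).trace := by
    simp only [Matrix.sub_mul, Matrix.mul_sub, Matrix.trace_sub]
    rw [Matrix.trace_mul_comm τ σ]
    ring
  rw [this, h1, h2, h3]
  have e : ((Fintype.card A₂ : ℂ)⁻¹ * (redR ψ * redR ψ).trace).re = purity (redR ψ) / Fintype.card A₂ := by
    rw [show (Fintype.card A₂ : ℂ)⁻¹ = (((Fintype.card A₂ : ℝ)⁻¹ : ℝ) : ℂ) by push_cast; rfl,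
      Complex.re_ofReal_mul, purity]
    ring
  rw [show ∀ x y : ℂ, x - 2 * y + y = x - y by intros; ring, Complex.sub_re, e]

/-- the output vector of the protocol -/
lemma map_mulVec (U : Matrix (A₁ × A₂) (A₁ × A₂) ℂ) (W : Matrix (((A₁ × A₂) × B) × A₂) (A₁ × B) ℂ)
    (ψ : R × ((A₁ × A₂) × B) → ℂ) (x : (R × ((A₁ × A₂) × B)) × (A₂ × A₂)) :
    (fqswMap (ιR := R) U (W.map star) *ᵥ ψ) x
      = (M1 U ψ * Wᴴ) (x.2.1, x.1.1) (x.1.2, x.2.2) := by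
  simp only [Matrix.mulVec, dotProduct, fqswMap, Matrix.of_apply, Matrix.map_apply, Matrix.mul_apply,
    Matrix.conjTranspose_apply, M1]
  rw [Fintype.sum_prod_type, Finset.sum_eq_single x.1.1]
  · simp only [if_true]
    simp only [Finset.sum_mul]
    calc _ = ∑ i, ∑ b, ∑ a, star (W (x.1.2, x.2.2) (a, b)) * U (a, x.2.1) i * ψ (x.1.1, (i, b)) := by
          rw [Fintype.sum_prod_type]
      _ = ∑ i, ∑ y : A₁ × B, star (W (x.1.2, x.2.2) y) * U (y.1, x.2.1) i * ψ (x.1.1, (i, y.2)) := by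
          refine Finset.sum_congr rfl fun i _ => ?_
          rw [Fintype.sum_prod_type, Finset.sum_comm]
      _ = _ := Finset.sum_comm
      _ = _ := by
          refine Finset.sum_congr rfl fun y _ => Finset.sum_congr rfl fun i _ => ?_
          ring
  · intro r _ hr
    simp [Ne.symm hr]
  · simp

/-- flatten a matrix to a vector -/
def flat (X : Matrix (A₂ × R) (((A₁ × A₂) × B) × A₂) ℂ) : (R × ((A₁ × A₂) × B)) × (A₂ × A₂) → ℂ :=
  fun x => X (x.2.1, x.1.1) (x.1.2, x.2.2)

lemma flat_dot (X Y : Matrix (A₂ × R) (((A₁ × A₂) × B) × A₂) ℂ) :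
    star (flat Y) ⬝ᵥ flat X = (Yᴴ * X).trace := by
  simp only [dotProduct, flat, Matrix.trace, Matrix.diag, Matrix.mul_apply, Matrix.conjTranspose_apply,
    Pi.star_apply]
  rw [← Fintype.sum_prod_type' (fun (y : ((A₁ × A₂) × B) × A₂) (x : A₂ × R) => star (Y x y) * X x y)]
  refine Fintype.sum_equiv
    ⟨fun x => ((x.1.2, x.2.2), (x.2.1, x.1.1)), fun y => ((y.2.2, y.1.1), (y.2.1, y.1.2)),
      fun _ => rfl, fun _ => rfl⟩ _ _ fun x => rfl

lemma hs_trace {m n : Type*} [Fintype m] [Fintype n] (X : Matrix m n ℂ) : (Xᴴ * X).trace = (hs X : ℂ) := by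
  have h := (Matrix.posSemidef_conjTranspose_mul_self X).trace_nonneg
  rw [Complex.nonneg_iff] at h
  apply Complex.ext
  · simp [hs]
  · simp [← h.2]

lemma pure_kron (ψ : R × ((A₁ × A₂) × B) → ℂ) :
    pureState ψ ⊗ₖ maxEntState A₂ = pureState (flat (M2 ψ)) := by
  ext x y
  simp only [pureState, maxEntState, Matrix.kroneckerMap_apply, Matrix.vecMulVec_apply, flat, M2,
    Matrix.of_apply, Pi.star_apply, star_mul']
  ring

lemma map_pure {p q : Type} [Fintype p] [Fintype q] (F : Matrix p q ℂ) (v : q → ℂ) :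
    F * pureState v * Fᴴ = pureState (F *ᵥ v) := by
  unfold pureState
  rw [Matrix.mul_vecMulVec, Matrix.vecMulVec_mul, Matrix.star_mulVec]

theorem protocol [Nonempty A₁] [Nonempty A₂] (h2 : 2 ≤ Fintype.card (A₁ × A₂))
    (ψ : R × ((A₁ × A₂) × B) → ℂ) (hψ : star ψ ⬝ᵥ ψ = 1) (ε : ℝ) (hε : 0 ≤ ε)
    (h : (Fintype.card A₂ * Fintype.card R : ℝ) * (2 * purity (redAR ψ) / Fintype.card A₁) ≤ ε ^ 2) :
    ∃ (U : Matrix (A₁ × A₂) (A₁ × A₂) ℂ)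
        (V : Matrix (((A₁ × A₂) × B) × A₂) (A₁ × B) ℂ),
        U ∈ Matrix.unitaryGroup (A₁ × A₂) ℂ ∧ Vᴴ * V = 1 ∧
        traceNorm
            (fqswMap (ιR := R) U V * pureState ψ * (fqswMap (ιR := R) U V)ᴴ - pureState ψ ⊗ₖ maxEntState A₂)
          ≤ 2 * Real.sqrt ε := by
  obtain ⟨U, hU, hb⟩ := exists_good_unitary h2 (tt ψ) _ _ _ (tt_PR ψ) (tt_PAR ψ) rfl
    (purity_nonneg _ (redR_herm ψ)) (by rw [tt_S]; positivity) (tt_S_le ψ)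
  have t1 := hs_of_marg ψ hψ (M1 U ψ) (sigma_marg U hU ψ)
  have t2 := hs_of_marg ψ hψ (M2 ψ) (tau_marg ψ)
  have hc : Fintype.card (A₁ × B) ≤ Fintype.card (((A₁ × A₂) × B) × A₂) := by
    simp only [Fintype.card_prod]
    have : 1 ≤ Fintype.card A₂ := Fintype.card_pos
    calc Fintype.card A₁ * Fintype.card B = Fintype.card A₁ * 1 * Fintype.card B * 1 := by ring
      _ ≤ _ := by gcongr
  obtain ⟨W, hW, hov⟩ := uhlmann_ps hc (M1 U ψ) (M2 ψ) t1 t2 ε hε (by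
    rw [diff_trace U hU]
    refine le_trans ?_ h
    rw [Fintype.card_prod]
    push_cast
    gcongr
    linarith)
  refine ⟨U, W.map star, Matrix.mem_unitaryGroup_iff'.2 hU, ?_, ?_⟩
  · ext i j
    have := congrArg star (congrFun (congrFun hW i) j)
    simp only [Matrix.mul_apply, Matrix.conjTranspose_apply, star_sum, star_mul', star_star] at this
    simp only [Matrix.mul_apply, Matrix.conjTranspose_apply, Matrix.map_apply, star_star]
    rw [this, Matrix.one_apply]
    split_ifs <;> simp
  · have e : fqswMap (ιR := R) U (W.map star) *ᵥ ψ = flat (M1 U ψ * Wᴴ) := by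
      funext x
      exact map_mulVec U W ψ x
    rw [map_pure, pure_kron, e]
    apply traceNorm_pure_le
    · rw [flat_dot, hs_trace, ← hs_conjTranspose, Matrix.conjTranspose_mul, Matrix.conjTranspose_conjTranspose,
        hs_isom_mul W hW, hs_conjTranspose, t1]
      simp
    · rw [flat_dot, hs_trace, t2]; simp
    · rw [flat_dot, ← Matrix.mul_assoc]; exact hov

end protocol

end FQSW

namespace FQSW

lemma num_main (n : ℕ) (δ HA HR HAR d1 d2 dR PAR PP : ℝ) 
    (hd1 : 0 < d1) (hd2 : 0 < d2) (hdR0 : 0 ≤ dR) (hP0 : 0 ≤ PAR) (hPP : 0 ≤ PP)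
    (hdA : d1 * d2 ≤ 2 ^ ((n : ℝ) * (HA + δ)))
    (hdR : dR ≤ 2 ^ ((n : ℝ) * (HR + δ)))
    (hpurAR : PAR ≤ 2 ^ (-(n : ℝ) * (HAR - δ)))
    (hpurA : PP ≤ 2 ^ (-(n : ℝ) * (HA + HR - 2 * δ)))
    (hdA1 : (n : ℝ) * ((HA + HR - HAR) / 2 + 2 * δ) ≤ Real.logb 2 d1)
    (hnI : (n : ℝ) * δ + 1 ≤ (n : ℝ) * (HA + HR - HAR)) :
    d1 * d2 * dR / d1 ^ 2 * PAR ≤ 2 ^ (-(n : ℝ) * δ) ∧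
    d1 * d2 * dR / d1 ^ 2 * PP ≤ 2 ^ (-(n : ℝ) * δ) / 2 := by
  have h1 : (2 : ℝ) ^ ((n : ℝ) * ((HA + HR - HAR) / 2 + 2 * δ)) ≤ d1 :=
    (Real.le_logb_iff_rpow_le (by norm_num) hd1).1 hdA1
  have h2 : (2 : ℝ) ^ ((n : ℝ) * ((HA + HR - HAR) + 4 * δ)) ≤ d1 ^ 2 := by
    calc (2 : ℝ) ^ ((n : ℝ) * ((HA + HR - HAR) + 4 * δ))
        = ((2 : ℝ) ^ ((n : ℝ) * ((HA + HR - HAR) / 2 + 2 * δ))) ^ 2 := by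
          rw [← Real.rpow_natCast, ← Real.rpow_mul (by norm_num)]
          congr 1; push_cast; ring
      _ ≤ _ := by gcongr
  have h3 : d1 * d2 * dR / d1 ^ 2 ≤ 2 ^ ((n : ℝ) * (HA + δ)) * 2 ^ ((n : ℝ) * (HR + δ)) /
      2 ^ ((n : ℝ) * ((HA + HR - HAR) + 4 * δ)) := by
    gcongr
  rw [← Real.rpow_add (by norm_num), ← Real.rpow_sub (by norm_num)] at h3
  have hnn : 0 ≤ d1 * d2 * dR / d1 ^ 2 := by positivity
  constructor
  · refine (mul_le_mul h3 hpurAR hP0 (by positivity)).trans ?_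
    rw [← Real.rpow_add (by norm_num)]
    refine Real.rpow_le_rpow_of_exponent_le (by norm_num) ?_
    apply le_of_eq; ring
  · refine (mul_le_mul h3 hpurA hPP (by positivity)).trans ?_
    rw [← Real.rpow_add (by norm_num)]
    have : (2 : ℝ) ^ (-(n : ℝ) * δ) / 2 = 2 ^ (-(n : ℝ) * δ - 1) := by
      rw [Real.rpow_sub (by norm_num), Real.rpow_one]
    rw [this]
    refine Real.rpow_le_rpow_of_exponent_le (by norm_num) ?_
    linarith

lemma num_eq (x : ℝ) : 2 * (4 * (2 : ℝ) ^ x) ^ ((1 : ℝ) / 4) = Real.sqrt 8 * 2 ^ (x / 4) := by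
  have : Real.sqrt 8 = 2 * 4 ^ ((1 : ℝ) / 4) := by
    rw [show (8 : ℝ) = 2 ^ 2 * 2 by norm_num, Real.sqrt_mul (by norm_num), Real.sqrt_sq (by norm_num),
      Real.sqrt_eq_rpow, show (4 : ℝ) = 2 ^ (2 : ℝ) by norm_num, ← Real.rpow_mul (by norm_num)]
    norm_num
  rw [Real.mul_rpow (by norm_num) (by positivity), ← Real.rpow_mul (by norm_num), this,
    show x * (1 / 4) = x / 4 by ring]
  ring

lemma num_eq' (x : ℝ) : 2 * Real.sqrt (2 * (2 : ℝ) ^ (x / 2)) = Real.sqrt 8 * 2 ^ (x / 4) := by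
  rw [← num_eq, Real.sqrt_eq_rpow, show (4 * (2 : ℝ) ^ x) = (2 * (2 : ℝ) ^ (x / 2)) ^ (2 : ℝ) by
    rw [Real.mul_rpow (by norm_num) (by positivity), ← Real.rpow_mul (by norm_num)]
    norm_num,
    ← Real.rpow_mul (by positivity)]
  norm_num

end FQSW

/-- **I.i.d. form of the fully quantum Slepian–Wolf bound.**  Under the typicality bounds
`d_A ≤ 2^{n(H_A+δ)}`, `d_R ≤ 2^{n(H_R+δ)}`, `Tr[(ψ^{AR})²] ≤ 2^{−n(H_{AR}−δ)}`,
`Tr[(ψ^A)²]Tr[(ψ^R)²] ≤ 2^{−n(H_A+H_R−2δ)}`, `log₂ d_{A₁} ≥ n(I/2+2δ)` and `nI ≥ nδ+1`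
(where `I = H_A + H_R − H_{AR}`), the one-shot FQSW error bound is at most
`√8 · 2^{−nδ/4}`; consequently there are a unitary `U` on `A = A₁⊗A₂`, a space `B̃` of
dimension `d_{A₂}`, and an isometry `V : A₁⊗B → (A⊗B)⊗B̃` with
`‖ (V∘U) ψ (V∘U)† − ψ^{R(AB)} ⊗ Φ^{A₂B̃} ‖₁ ≤ √8 · 2^{−nδ/4}`. -/
theorem iid_FQSW
    {ιR ιA₁ ιA₂ ιB : Type}
    [Fintype ιR] [DecidableEq ιR] [Fintype ιA₁] [DecidableEq ιA₁]
    [Fintype ιA₂] [DecidableEq ιA₂] [Fintype ιB] [DecidableEq ιB]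
    (ψ : ιR × ((ιA₁ × ιA₂) × ιB) → ℂ)
    (hψ : star ψ ⬝ᵥ ψ = 1)
    (n : ℕ) (hn : 1 ≤ n) (δ HA HR HAR : ℝ) (hδ : 0 < δ)
    (hdA : (Fintype.card ιA₁ * Fintype.card ιA₂ : ℝ) ≤ 2 ^ ((n : ℝ) * (HA + δ)))
    (hdR : (Fintype.card ιR : ℝ) ≤ 2 ^ ((n : ℝ) * (HR + δ)))
    (hpurAR : purity (redAR ψ) ≤ 2 ^ (-(n : ℝ) * (HAR - δ)))
    (hpurA : purity (redA ψ) * purity (redR ψ) ≤ 2 ^ (-(n : ℝ) * (HA + HR - 2 * δ)))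
    (hdA1 : (n : ℝ) * ((HA + HR - HAR) / 2 + 2 * δ) ≤ Real.logb 2 (Fintype.card ιA₁))
    (hnI : (n : ℝ) * δ + 1 ≤ (n : ℝ) * (HA + HR - HAR)) :
    2 * ((2 * (Fintype.card ιA₁ * Fintype.card ιA₂ : ℝ) * (Fintype.card ιR : ℝ)
            / (Fintype.card ιA₁ : ℝ) ^ 2)
          * (purity (redAR ψ) + 2 * purity (redA ψ) * purity (redR ψ)))
          ^ ((1 : ℝ) / 4)
        ≤ Real.sqrt 8 * 2 ^ (-(n : ℝ) * δ / 4)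
    ∧ ∃ (U : Matrix (ιA₁ × ιA₂) (ιA₁ × ιA₂) ℂ)
        (V : Matrix (((ιA₁ × ιA₂) × ιB) × ιA₂) (ιA₁ × ιB) ℂ),
        U ∈ Matrix.unitaryGroup (ιA₁ × ιA₂) ℂ ∧ Vᴴ * V = 1 ∧
        traceNorm
            (fqswMap (ιR := ιR) U V * pureState ψ * (fqswMap (ιR := ιR) U V)ᴴ - pureState ψ ⊗ₖ maxEntState ιA₂)
          ≤ Real.sqrt 8 * 2 ^ (-(n : ℝ) * δ / 4) := by
  have hne : Nonempty (ιR × ((ιA₁ × ιA₂) × ιB)) := by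
    by_contra hcon
    rw [not_nonempty_iff] at hcon
    simp [dotProduct] at hψ
  obtain ⟨r0, ⟨⟨a0, m0⟩, b0⟩⟩ := hne
  have : Nonempty ιA₁ := ⟨a0⟩
  have : Nonempty ιA₂ := ⟨m0⟩
  have c1 : (0 : ℝ) < Fintype.card ιA₁ := by exact_mod_cast Fintype.card_pos
  have c2 : (0 : ℝ) < Fintype.card ιA₂ := by exact_mod_cast Fintype.card_pos
  have hn' : (0 : ℝ) < n := by exact_mod_cast hn
  have q1 := FQSW.purity_nonneg _ (FQSW.redAR_herm ψ)
  have q2 := FQSW.purity_nonneg _ (FQSW.redA_herm ψ)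
  have q3 := FQSW.purity_nonneg _ (FQSW.redR_herm ψ)
  obtain ⟨k1, k2⟩ := FQSW.num_main n δ HA HR HAR (Fintype.card ιA₁) (Fintype.card ιA₂)
    (Fintype.card ιR) (purity (redAR ψ)) (purity (redA ψ) * purity (redR ψ)) c1 c2 (by positivity)
    q1 (mul_nonneg q2 q3) hdA hdR hpurAR hpurA hdA1 hnI
  constructor
  · rw [← FQSW.num_eq]
    refine mul_le_mul_of_nonneg_left (Real.rpow_le_rpow (by positivity) ?_ (by norm_num)) (by norm_num)
    calc _ = 2 * (Fintype.card ιA₁ * Fintype.card ιA₂ * Fintype.card ιR / (Fintype.card ιA₁ : ℝ) ^ 2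
            * purity (redAR ψ)) + 4 * (Fintype.card ιA₁ * Fintype.card ιA₂ * Fintype.card ιR
            / (Fintype.card ιA₁ : ℝ) ^ 2 * (purity (redA ψ) * purity (redR ψ))) := by ring
      _ ≤ _ := by linarith
  · rw [← FQSW.num_eq']
    have hd1 : 2 ≤ Fintype.card ιA₁ := by
      by_contra hlt
      have h1 : Fintype.card ιA₁ = 1 := by
        have := Fintype.card_pos (α := ιA₁)
        omega
      rw [h1] at hdA1
      simp only [Nat.cast_one, Real.logb_one] at hdA1
      nlinarith [mul_pos hn' hδ]
    have h2 : 2 ≤ Fintype.card (ιA₁ × ιA₂) := by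
      rw [Fintype.card_prod]
      have := Fintype.card_pos (α := ιA₂)
      nlinarith
    apply FQSW.protocol h2 ψ hψ _ (by positivity)
    have e : ((2 : ℝ) * 2 ^ (-(n : ℝ) * δ / 2)) ^ 2 = 4 * 2 ^ (-(n : ℝ) * δ) := by
      rw [mul_pow, ← Real.rpow_natCast (_ ^ _), ← Real.rpow_mul (by norm_num)]
      norm_num
    rw [e]
    calc _ = 2 * (Fintype.card ιA₁ * Fintype.card ιA₂ * Fintype.card ιR / (Fintype.card ιA₁ : ℝ) ^ 2
            * purity (redAR ψ)) := by field_simp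
      _ ≤ 2 * 2 ^ (-(n : ℝ) * δ) := by linarith
      _ ≤ _ := by
        have : (0 : ℝ) < 2 ^ (-(n : ℝ) * δ) := by positivity
        linarith
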